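/- arXiv:2605.22553 — 6 statements merged into one kernel-verified Lean document; each statement's English description precedes it below -/
import Mathlib

section
/- Let k ≥ 2, let G be a graph, let Φ be a maximal k-clique-cover of G, let 1 ≤ i ≤ k − 1, and let K and K′ be two distinct cliques in Φ_i (both of order i). Then the complement of the bipartite graph induced by G between V(K) and V(K′) contains a perfect matching; that is, there is a bijection f : V(K) → V(K′) such that v and f(v) are nonadjacent in G for every v ∈ V(K). -/
/-- `Φ` is a `k`-clique-cover of `G`: a collection of pairwise vertex-disjoint cliques,
each of order between `1` and `k`, whose vertex sets partition `V(G)`. -/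
def IsCliqueCover {V : Type*} (G : SimpleGraph V) (k : ℕ) (Φ : Finset (Finset V)) : Prop :=
  (∀ S ∈ Φ, G.IsClique (S : Set V) ∧ 1 ≤ S.card ∧ S.card ≤ k) ∧
  ((Φ : Set (Finset V)).Pairwise fun S T => Disjoint S T) ∧
  ∀ v : V, ∃ S ∈ Φ, v ∈ S

/-- `coverVec Φ i = |Φ_i|`, the number of cliques of order `i` in `Φ`. -/
def coverVec {V : Type*} (Φ : Finset (Finset V)) (i : ℕ) : ℕ :=
  (Φ.filter fun S => S.card = i).card

/-- `Φ` is a maximal `k`-clique-cover of `G`: the vector `(|Φ_k|, …, |Φ_1|)` is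
lexicographically maximal among all `k`-clique-covers of `G`. -/
def IsMaxCliqueCover {V : Type*} (G : SimpleGraph V) (k : ℕ) (Φ : Finset (Finset V)) : Prop :=
  IsCliqueCover G k Φ ∧
  ∀ Ψ : Finset (Finset V), IsCliqueCover G k Ψ →
    ∀ j, 1 ≤ j → j ≤ k →
      (∀ i, j < i → i ≤ k → coverVec Ψ i = coverVec Φ i) →
      coverVec Ψ j ≤ coverVec Φ j

/-!
Any clique `T` of order at most `k` can be carved out of a cover: add `T` and delete its vertices
from all other members. If `T` is larger than every member it meets, this increases `|Φ_j|` for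
`j = |T|` and leaves it unchanged for larger `j`, so it cannot happen in a maximal cover. Hence no
clique inside `K ∪ K'` is larger than both `K` and `K'`. A set `A ⊆ K` together with its common
neighbours in `K'` is such a clique, and the resulting bound on its order is Hall's condition for
the nonadjacency relation.
-/

theorem exists_injOn_of_forall_card_le_card_filter {α β : Type*} [Nonempty β]
    {s : Finset α} {t : Finset β} (r : α → β → Prop) [∀ a, DecidablePred (r a)]
    (hall : ∀ A ⊆ s, A.card ≤ (t.filter fun b => ∃ a ∈ A, r a b).card) :
    ∃ f : α → β, Set.MapsTo f s t ∧ Set.InjOn f s ∧ ∀ a ∈ s, r a (f a) := by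
  classical
  have hall' (A : Finset s) : A.card ≤ (A.biUnion fun a => t.filter (r a)).card := by
    have hfilter : (t.filter fun b => ∃ a ∈ A.map (Function.Embedding.subtype _), r a b) =
        A.biUnion fun a => t.filter (r a) := by
      ext b
      simp only [Finset.mem_filter, Finset.mem_map, Finset.mem_biUnion,
        exists_exists_and_eq_and, Function.Embedding.subtype_apply]
      grind
    rw [← hfilter, ← Finset.card_map (Function.Embedding.subtype _)]
    exact hall _ A.map_subtype_subset
  obtain ⟨g, hg_inj, hg_mem⟩ := (Finset.all_card_le_biUnion_card_iff_exists_injective _).1 hall'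
  obtain ⟨f, rfl⟩ := Subtype.exists_pi_extension (α := fun _ => β) g
  have hf_mem (a : α) (ha : a ∈ s) : f a ∈ t ∧ r a (f a) := Finset.mem_filter.1 (hg_mem ⟨a, ha⟩)
  exact ⟨f, fun a ha => (hf_mem a ha).1, Set.injOn_iff_injective.2 hg_inj,
    fun a ha => (hf_mem a ha).2⟩

theorem exists_injOn_not_adj_of_forall_isClique_card_le {V : Type*} [DecidableEq V]
    {G : SimpleGraph V} {K K' : Finset V}
    (hK : G.IsClique (K : Set V)) (hK' : G.IsClique (K' : Set V)) (hdisj : Disjoint K K')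
    (hmax : ∀ T ⊆ K ∪ K', G.IsClique (T : Set V) → T.card ≤ K'.card) :
    ∃ f : V → V, Set.MapsTo f K K' ∧ Set.InjOn f K ∧ ∀ v ∈ K, ¬ G.Adj v (f v) := by
  classical
  rcases K.eq_empty_or_nonempty with rfl | ⟨v, -⟩
  · exact ⟨id, by simp [Set.mapsTo_empty]⟩
  have : Nonempty V := ⟨v⟩
  refine exists_injOn_of_forall_card_le_card_filter (fun a b => ¬ G.Adj a b) fun A hA => ?_
  let B := K'.filter fun b => ¬ ∃ a ∈ A, ¬ G.Adj a b
  have hB : B ⊆ K' := Finset.filter_subset _ _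
  have hclique : G.IsClique ((A ∪ B : Finset V) : Set V) := by
    rw [Finset.coe_union]
    refine Set.pairwise_union.2 ⟨hK.subset hA, hK'.subset hB, fun a ha b hb _ => ?_⟩
    have hab : G.Adj a b := by
      by_contra hab
      exact (Finset.mem_filter.1 hb).2 ⟨a, ha, hab⟩
    exact ⟨hab, hab.symm⟩
  have hcard : A.card + B.card ≤ K'.card := by
    rw [← Finset.card_union_of_disjoint (hdisj.mono hA hB)]
    exact hmax _ (Finset.union_subset_union hA hB) hclique
  have hsplit : (K'.filter fun b => ∃ a ∈ A, ¬ G.Adj a b).card + B.card = K'.card :=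
    Finset.card_filter_add_card_filter_not _
  omega

section Carve

variable {V : Type*} [DecidableEq V] {G : SimpleGraph V} {k : ℕ} {Φ : Finset (Finset V)}
  {S T : Finset V}

/-- The cover obtained from `Φ` by making `T` a member and deleting its vertices from all members
of `Φ`; members of `Φ` contained in `T` disappear, since cliques of a cover are nonempty. -/
def carve (Φ : Finset (Finset V)) (T : Finset V) : Finset (Finset V) :=
  insert T ((Φ.image (· \ T)).erase ∅)

theorem mem_carve : S ∈ carve Φ T ↔ S = T ∨ S.Nonempty ∧ ∃ R ∈ Φ, R \ T = S := by
  simp only [carve, Finset.mem_insert, Finset.mem_erase, Finset.mem_image,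
    Finset.nonempty_iff_ne_empty]

theorem mem_carve_iff_mem_insert (hS : S.Nonempty)
    (hΦT : ∀ R ∈ Φ, ¬ Disjoint R T → R.card < S.card) :
    S ∈ carve Φ T ↔ S ∈ insert T Φ := by
  rw [mem_carve, Finset.mem_insert]
  refine or_congr_right ⟨?_, fun hSΦ => ⟨hS, S, hSΦ, ?_⟩⟩
  · rintro ⟨-, R, hR, rfl⟩
    have hRT : Disjoint R T := by
      by_contra h
      exact (hΦT R hR h).not_ge (Finset.card_le_card Finset.sdiff_subset)
    rwa [Finset.sdiff_eq_self_of_disjoint hRT]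
  · refine Finset.sdiff_eq_self_of_disjoint ?_
    by_contra h
    exact (hΦT S hSΦ h).false

theorem coverVec_carve {j : ℕ} (hj : 0 < j) (hΦT : ∀ R ∈ Φ, ¬ Disjoint R T → R.card < j) :
    coverVec (carve Φ T) j = coverVec (insert T Φ) j := by
  unfold coverVec
  congr 1
  ext S
  simp only [Finset.mem_filter]
  refine and_congr_left ?_
  rintro rfl
  exact mem_carve_iff_mem_insert (Finset.card_pos.1 hj) hΦT

theorem coverVec_insert_of_card_ne {j : ℕ} (hj : T.card ≠ j) :
    coverVec (insert T Φ) j = coverVec Φ j := by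
  rw [coverVec, Finset.filter_insert, if_neg hj, coverVec]

theorem coverVec_insert_card (hT : T ∉ Φ) :
    coverVec (insert T Φ) T.card = coverVec Φ T.card + 1 := by
  rw [coverVec, Finset.filter_insert, if_pos rfl,
    Finset.card_insert_of_notMem fun h => hT (Finset.mem_of_mem_filter T h), coverVec]

protected theorem IsCliqueCover.carve (hΦ : IsCliqueCover G k Φ) (hclique : G.IsClique (T : Set V))
    (hne : T.Nonempty) (hcard : T.card ≤ k) : IsCliqueCover G k (carve Φ T) := by
  obtain ⟨hmem, hdisj, hcover⟩ := hΦ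
  refine ⟨fun S hS => ?_, fun S hS S' hS' hSS' => ?_, fun v => ?_⟩
  · rcases mem_carve.1 hS with rfl | ⟨hSne, R, hR, rfl⟩
    · exact ⟨hclique, hne.card_pos, hcard⟩
    · obtain ⟨hRclique, -, hRcard⟩ := hmem R hR
      exact ⟨hRclique.subset (Finset.coe_subset.2 Finset.sdiff_subset), hSne.card_pos,
        (Finset.card_le_card Finset.sdiff_subset).trans hRcard⟩
  · rcases mem_carve.1 hS with rfl | ⟨-, R, hR, rfl⟩ <;>
      rcases mem_carve.1 hS' with rfl | ⟨-, R', hR', rfl⟩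
    · exact absurd rfl hSS'
    · exact Finset.disjoint_sdiff
    · exact Finset.sdiff_disjoint
    · have hRR' : R ≠ R' := fun h => hSS' (h ▸ rfl)
      exact (hdisj hR hR' hRR').mono Finset.sdiff_subset Finset.sdiff_subset
  · by_cases hvT : v ∈ T
    · exact ⟨T, mem_carve.2 (.inl rfl), hvT⟩
    · obtain ⟨R, hR, hvR⟩ := hcover v
      have hv : v ∈ R \ T := Finset.mem_sdiff.2 ⟨hvR, hvT⟩
      exact ⟨R \ T, mem_carve.2 (.inr ⟨⟨v, hv⟩, R, hR, rfl⟩), hv⟩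

end Carve

namespace IsMaxCliqueCover

variable {V : Type*} {G : SimpleGraph V} {k : ℕ} {Φ : Finset (Finset V)}

theorem exists_not_disjoint_card_le (hΦ : IsMaxCliqueCover G k Φ) {T : Finset V}
    (hclique : G.IsClique (T : Set V)) (hne : T.Nonempty) (hcard : T.card ≤ k) :
    ∃ R ∈ Φ, ¬ Disjoint R T ∧ T.card ≤ R.card := by
  classical
  by_contra! hsmall
  have hTΦ : T ∉ Φ := fun h => (hsmall T h (by simpa using hne.ne_empty)).false
  have hle : coverVec (carve Φ T) T.card ≤ coverVec Φ T.card := by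
    refine hΦ.2 _ (hΦ.1.carve hclique hne hcard) _ hne.card_pos hcard fun j hj _ => ?_
    rw [coverVec_carve (by omega) fun R hR hRT => (hsmall R hR hRT).trans hj,
      coverVec_insert_of_card_ne hj.ne]
  rw [coverVec_carve hne.card_pos hsmall, coverVec_insert_card hTΦ] at hle
  omega

theorem card_le_of_isClique (hΦ : IsMaxCliqueCover G k Φ) {T : Finset V} {n : ℕ} (hn : n < k)
    (hclique : G.IsClique (T : Set V)) (hΦT : ∀ R ∈ Φ, ¬ Disjoint R T → R.card ≤ n) :
    T.card ≤ n := by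
  by_contra! hlt
  -- `T` may have more than `k` vertices, so pass to a subclique of order `n + 1 ≤ k`.
  obtain ⟨U, hUT, hU⟩ := Finset.exists_subset_card_eq (Nat.succ_le_of_lt hlt)
  obtain ⟨R, hR, hRU, hle⟩ := hΦ.exists_not_disjoint_card_le
    (hclique.subset (Finset.coe_subset.2 hUT)) (Finset.card_pos.1 (by omega)) (by omega)
  have hRn : R.card ≤ n := hΦT R hR fun h => hRU (h.mono_right hUT)
  omega

theorem card_le_of_isClique_of_subset_union [DecidableEq V] (hΦ : IsMaxCliqueCover G k Φ)
    {K K' T : Finset V} (hK : K ∈ Φ) (hK' : K' ∈ Φ) {n : ℕ} (hn : n < k)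
    (hKn : K.card ≤ n) (hKn' : K'.card ≤ n) (hclique : G.IsClique (T : Set V))
    (hT : T ⊆ K ∪ K') : T.card ≤ n := by
  refine hΦ.card_le_of_isClique hn hclique fun R hR hRT => ?_
  obtain ⟨v, hvR, hvT⟩ := Finset.not_disjoint_iff.1 hRT
  have eq_of_mem {L : Finset V} (hL : L ∈ Φ) (hvL : v ∈ L) : R = L :=
    hΦ.1.2.1.eq hR hL (Finset.not_disjoint_iff.2 ⟨v, hvR, hvL⟩)
  rcases Finset.mem_union.1 (hT hvT) with hvK | hvK'
  · rwa [eq_of_mem hK hvK]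
  · rwa [eq_of_mem hK' hvK']

end IsMaxCliqueCover

theorem maximal_cover_complement_matching_general {V : Type*} {G : SimpleGraph V} {k : ℕ}
    {Φ : Finset (Finset V)} (hΦ : IsMaxCliqueCover G k Φ) {K K' : Finset V}
    (hK : K ∈ Φ) (hK' : K' ∈ Φ) (hne : K ≠ K') (hle : K.card ≤ K'.card) (hlt : K'.card < k) :
    ∃ f : V → V, Set.MapsTo f K K' ∧ Set.InjOn f K ∧ ∀ v ∈ K, ¬ G.Adj v (f v) := by
  classical
  obtain ⟨hmem, hdisj, -⟩ := hΦ.1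
  exact exists_injOn_not_adj_of_forall_isClique_card_le (hmem K hK).1 (hmem K' hK').1
    (hdisj hK hK' hne) fun T hT hclique =>
      hΦ.card_le_of_isClique_of_subset_union hK hK' hlt hle le_rfl hclique hT

/-- **Claim.** If `Φ` is a maximal `k`-clique-cover of `G` and `K ≠ K'` are two cliques of
`Φ` of the same order `i ≤ k - 1`, then the complement of the bipartite graph induced by `G`
between `V(K)` and `V(K')` has a perfect matching: there is a bijection `f : V(K) → V(K')`
with `v` and `f v` nonadjacent in `G` for every `v ∈ K`. -/
theorem maximal_cover_complement_matching {V : Type*} [Fintype V]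
    (G : SimpleGraph V) (k : ℕ) (hk : 2 ≤ k)
    (Φ : Finset (Finset V)) (hΦ : IsMaxCliqueCover G k Φ)
    (i : ℕ) (hi1 : 1 ≤ i) (hik : i ≤ k - 1)
    (K K' : Finset V) (hK : K ∈ Φ) (hK' : K' ∈ Φ) (hne : K ≠ K')
    (hcard : K.card = i) (hcard' : K'.card = i) :
    ∃ f : V → V, Set.BijOn f (K : Set V) (K' : Set V) ∧ ∀ v ∈ K, ¬ G.Adj v (f v) := by
  obtain ⟨f, hmaps, hinj, hf⟩ :=
    maximal_cover_complement_matching_general hΦ hK hK' hne (by omega) (by omega)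
  exact ⟨f, ⟨hmaps, hinj, Finset.surjOn_of_injOn_of_card_le f hmaps hinj (by omega)⟩, hf⟩
end

section
/- Let k ≥ 2 be an integer and let γ, d, ε be nonnegative reals. Let 𝒢 be a graph on ℓ vertices such that d(x) + d(y) ≥ 2(1 − 1/(k−1) + γ − d − 2ε)·ℓ for all nonadjacent x, y ∈ V(𝒢), and let Φ be a maximal k-clique-cover of 𝒢. If K₁, …, K_p are p ≥ 2 distinct cliques in Φ_i for some i with 1 ≤ i ≤ k − 1, then Σ_{v ∈ V(K₁) ∪ … ∪ V(K_p)} d_𝒢(v) ≥ p·i·(1 − 1/(k−1) + γ − d − 2ε)·ℓ. -/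
open Finset

section Averaging

variable {ι M : Type*} [AddCommMonoid M] [PartialOrder M] [IsOrderedAddMonoid M]

theorem card_nsmul_le_two_nsmul_sum_of_pairwise {s : Finset ι} (hs : s.Nontrivial) {f : ι → M}
    {a : M} (h : (s : Set ι).Pairwise fun i j => a ≤ f i + f j) :
    #s • a ≤ 2 • ∑ i ∈ s, f i := by
  obtain ⟨σ, hσ, hσs⟩ := s.countable_toSet.exists_cycleOn
  have hsum : ∑ i ∈ s, f (σ i) = ∑ i ∈ s, f i := σ.sum_comp s f hσs
  calc
    #s • a ≤ ∑ i ∈ s, (f i + f (σ i)) := s.card_nsmul_le_sum _ _ fun i hi =>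
      h hi (hσ.apply_mem_iff.2 hi) (hσ.apply_ne hs hi).symm
    _ = 2 • ∑ i ∈ s, f i := by rw [sum_add_distrib, hsum, two_nsmul]

end Averaging

section NonadjacentMatching

variable {V : Type*} [DecidableEq V] {G : SimpleGraph V} {A B : Finset V}

theorem exists_injective_not_adj_of_isClique (hA : G.IsClique (A : Set V))
    (hB : G.IsClique (B : Set V)) (hAB : ∀ C ⊆ A ∪ B, G.IsClique (C : Set V) → #C ≤ #B) :
    ∃ f : A → B, f.Injective ∧ ∀ a : A, ¬ G.Adj a (f a) := by
  classical
  refine (Fintype.all_card_le_filter_rel_iff_exists_injective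
    fun (a : A) (b : B) => ¬ G.Adj a b).1 fun S => ?_
  set N : Finset B := {b | ∃ a ∈ S, ¬ G.Adj a b}
  have hadj : ∀ a ∈ S, ∀ b ∈ Nᶜ, G.Adj a b := by
    intro a ha b hb
    by_contra hab
    exact mem_compl.1 hb (mem_filter.2 ⟨mem_univ b, a, ha, hab⟩)
  set S' : Finset V := S.map (.subtype _)
  set T' : Finset V := Nᶜ.map (.subtype _)
  have hS'A : S' ⊆ A := S.map_subtype_subset
  have hT'B : T' ⊆ B := Nᶜ.map_subtype_subset
  have hadj' : ∀ x ∈ S', ∀ y ∈ T', G.Adj x y := by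
    simpa only [S', T', forall_mem_map, Function.Embedding.subtype_apply] using hadj
  have hdisj : Disjoint S' T' := disjoint_left.2 fun x hxS hxT => G.irrefl (hadj' x hxS x hxT)
  have hclique : G.IsClique ((S' ∪ T' : Finset V) : Set V) := by
    rw [coe_union, SimpleGraph.isClique_iff, Set.pairwise_union]
    exact ⟨hA.subset hS'A, hB.subset hT'B, fun x hx y hy _ =>
      ⟨hadj' x hx y hy, (hadj' x hx y hy).symm⟩⟩
  have hcard : #S + #Nᶜ ≤ #B := by
    simpa only [card_union_of_disjoint hdisj, S', T', card_map] using
      hAB _ (union_subset_union hS'A hT'B) hclique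
  have hN : #N + #Nᶜ = #B := by rw [card_add_card_compl, Fintype.card_coe]
  omega

variable {M : Type*} [AddCommMonoid M] [PartialOrder M] [IsOrderedAddMonoid M]

theorem card_nsmul_le_sum_add_sum_of_isClique {w : V → M} {c : M}
    (hw : ∀ x y, x ≠ y → ¬ G.Adj x y → c ≤ w x + w y)
    (hA : G.IsClique (A : Set V)) (hB : G.IsClique (B : Set V)) (hdisj : Disjoint A B)
    (hcard : #A = #B) (hAB : ∀ C ⊆ A ∪ B, G.IsClique (C : Set V) → #C ≤ #B) :
    #A • c ≤ ∑ v ∈ A, w v + ∑ v ∈ B, w v := by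
  obtain ⟨f, hf_inj, hf⟩ := exists_injective_not_adj_of_isClique hA hB hAB
  have hf_bij : f.Bijective :=
    (Fintype.bijective_iff_injective_and_card f).2 ⟨hf_inj, by simpa using hcard⟩
  calc
    #A • c = #(univ : Finset A) • c := by rw [card_univ, Fintype.card_coe]
    _ ≤ ∑ a : A, (w a + w (f a)) := card_nsmul_le_sum _ _ _ fun a _ =>
      hw a (f a) (disjoint_iff_ne.1 hdisj a a.2 (f a) (f a).2) (hf a)
    _ = ∑ v ∈ A, w v + ∑ v ∈ B, w v := by
      rw [sum_add_distrib, hf_bij.sum_comp fun b : B => w b, sum_coe_sort A, sum_coe_sort B]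

end NonadjacentMatching

section Exchange

variable {V : Type*} [DecidableEq V] {G : SimpleGraph V} {k : ℕ} {Φ : Finset (Finset V)}
  {C : Finset V}

/-- The cover obtained from `Φ` by taking `C` as a new member and deleting its vertices from the
members of `Φ`. Members contained in `C` would become empty and are dropped, since a clique-cover
has nonempty members. -/
def insertClique (Φ : Finset (Finset V)) (C : Finset V) : Finset (Finset V) :=
  insert C ((Φ.image (· \ C)).erase ∅)

theorem mem_insertClique {T : Finset V} :
    T ∈ insertClique Φ C ↔ T = C ∨ T.Nonempty ∧ ∃ S ∈ Φ, S \ C = T := by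
  simp only [insertClique, mem_insert, mem_erase, mem_image, nonempty_iff_ne_empty]

theorem IsCliqueCover.insertClique (hΦ : IsCliqueCover G k Φ) (hC : G.IsClique (C : Set V))
    (hC_pos : C.Nonempty) (hCk : #C ≤ k) : IsCliqueCover G k (insertClique Φ C) := by
  obtain ⟨hclique, hdisj, hcover⟩ := hΦ
  refine ⟨fun T hT => ?_, fun T hT T' hT' hne => ?_, fun v => ?_⟩
  · obtain rfl | ⟨hT_pos, S, hS, rfl⟩ := mem_insertClique.1 hT
    · exact ⟨hC, hC_pos.card_pos, hCk⟩
    · obtain ⟨hS_clique, -, hSk⟩ := hclique S hS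
      exact ⟨hS_clique.subset sdiff_subset, hT_pos.card_pos, (card_le_card sdiff_subset).trans hSk⟩
  · obtain rfl | ⟨-, S, hS, rfl⟩ := mem_insertClique.1 hT <;>
      obtain rfl | ⟨-, S', hS', rfl⟩ := mem_insertClique.1 hT'
    · exact absurd rfl hne
    · exact disjoint_sdiff
    · exact sdiff_disjoint
    · exact (hdisj hS hS' fun h => hne (h ▸ rfl)).mono sdiff_subset sdiff_subset
  · by_cases hv : v ∈ C
    · exact ⟨C, mem_insertClique.2 (.inl rfl), hv⟩
    · obtain ⟨S, hS, hvS⟩ := hcover v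
      have hvSC : v ∈ S \ C := mem_sdiff.2 ⟨hvS, hv⟩
      exact ⟨S \ C, mem_insertClique.2 (.inr ⟨⟨v, hvSC⟩, S, hS, rfl⟩), hvSC⟩

theorem mem_insertClique_of_card_le (hC_pos : C.Nonempty)
    (hsmall : ∀ S ∈ Φ, ¬ Disjoint S C → #S < #C) {T : Finset V} (hT : #C ≤ #T) :
    T ∈ insertClique Φ C ↔ T = C ∨ T ∈ Φ := by
  rw [mem_insertClique]
  refine or_congr_right ⟨?_, fun hTΦ => ⟨card_pos.1 (hC_pos.card_pos.trans_le hT), T, hTΦ, ?_⟩⟩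
  · rintro ⟨-, S, hS, rfl⟩
    have hSC : Disjoint S C := not_not.1 fun h =>
      ((card_le_card sdiff_subset).trans_lt (hsmall S hS h)).not_ge hT
    rwa [sdiff_eq_self_of_disjoint hSC]
  · exact sdiff_eq_self_of_disjoint (not_not.1 fun h => (hsmall T hTΦ h).not_ge hT)

theorem coverVec_insertClique_of_card_lt (hC_pos : C.Nonempty)
    (hsmall : ∀ S ∈ Φ, ¬ Disjoint S C → #S < #C) {m : ℕ} (hm : #C < m) :
    coverVec (insertClique Φ C) m = coverVec Φ m := by
  unfold coverVec
  congr 1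
  ext T
  simp only [mem_filter, and_congr_left_iff]
  rintro rfl
  rw [mem_insertClique_of_card_le hC_pos hsmall hm.le, or_iff_right]
  rintro rfl
  exact hm.false

theorem coverVec_insertClique_card (hC_pos : C.Nonempty)
    (hsmall : ∀ S ∈ Φ, ¬ Disjoint S C → #S < #C) :
    coverVec (insertClique Φ C) #C = coverVec Φ #C + 1 := by
  have hCΦ : C ∉ Φ := fun h =>
    (hsmall C h fun hCC => hC_pos.ne_empty (disjoint_self.1 hCC)).false
  have hfilter : {T ∈ insertClique Φ C | #T = #C} = insert C {T ∈ Φ | #T = #C} := by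
    ext T
    rw [mem_filter, mem_insert, mem_filter]
    constructor
    · rintro ⟨hT, hT_card⟩
      exact ((mem_insertClique_of_card_le hC_pos hsmall hT_card.ge).1 hT).imp_right (⟨·, hT_card⟩)
    · rintro (rfl | ⟨hT, hT_card⟩)
      · exact ⟨mem_insertClique.2 (.inl rfl), rfl⟩
      · exact ⟨(mem_insertClique_of_card_le hC_pos hsmall hT_card.ge).2 (.inr hT), hT_card⟩
  rw [coverVec, hfilter, card_insert_of_notMem fun h => hCΦ (mem_filter.1 h).1, coverVec]

omit [DecidableEq V] in
theorem IsMaxCliqueCover.exists_card_le_of_isClique (hΦ : IsMaxCliqueCover G k Φ)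
    (hC : G.IsClique (C : Set V)) (hC_pos : C.Nonempty) (hCk : #C ≤ k) :
    ∃ S ∈ Φ, ¬ Disjoint S C ∧ #C ≤ #S := by
  classical
  by_contra! hsmall
  have hle : coverVec (insertClique Φ C) #C ≤ coverVec Φ #C :=
    hΦ.2 _ (hΦ.1.insertClique hC hC_pos hCk) _ hC_pos.card_pos hCk fun _ hm _ =>
      coverVec_insertClique_of_card_lt hC_pos hsmall hm
  rw [coverVec_insertClique_card hC_pos hsmall] at hle
  omega

theorem IsMaxCliqueCover.card_le_of_isClique_of_subset_union_s3 (hΦ : IsMaxCliqueCover G k Φ)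
    {A B : Finset V} (hA : A ∈ Φ) (hB : B ∈ Φ) {i : ℕ} (hik : i < k) (hAi : #A ≤ i)
    (hBi : #B ≤ i) (hC : G.IsClique (C : Set V)) (hCAB : C ⊆ A ∪ B) : #C ≤ i := by
  by_contra! hiC
  obtain ⟨D, hDC, hD_card⟩ := exists_subset_card_eq (Nat.succ_le_of_lt hiC)
  obtain ⟨S, hS, hSD, hDS⟩ := hΦ.exists_card_le_of_isClique (hC.subset hDC)
    (card_pos.1 (by omega)) (by omega)
  have hSAB : S = A ∨ S = B := by
    by_contra! hne
    exact hSD (.mono_right (hDC.trans hCAB) <| disjoint_union_right.2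
      ⟨hΦ.1.2.1 hS hA hne.1, hΦ.1.2.1 hS hB hne.2⟩)
  obtain rfl | rfl := hSAB <;> omega

end Exchange

theorem degree_sum_cliques_lower_bound_general {V ι M : Type*} [DecidableEq V] [Fintype ι]
    [Nontrivial ι] [AddCommMonoid M] [PartialOrder M] [IsOrderedAddMonoid M]
    {G : SimpleGraph V} {k : ℕ} {w : V → M} {c : M}
    (hw : ∀ x y, x ≠ y → ¬ G.Adj x y → c ≤ w x + w y)
    {Φ : Finset (Finset V)} (hΦ : IsMaxCliqueCover G k Φ) {i : ℕ} (hik : i < k)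
    {K : ι → Finset V} (hKinj : Function.Injective K) (hKmem : ∀ j, K j ∈ Φ)
    (hKcard : ∀ j, #(K j) = i) :
    Fintype.card ι • i • c ≤ 2 • ∑ v ∈ univ.biUnion K, w v := by
  have hdisj : Pairwise fun j j' => Disjoint (K j) (K j') := fun j j' hne =>
    hΦ.1.2.1 (hKmem j) (hKmem j') (hKinj.ne hne)
  rw [sum_biUnion (hdisj.set_pairwise _)]
  refine card_nsmul_le_two_nsmul_sum_of_pairwise univ_nontrivial fun j _ j' _ hne => ?_
  rw [← hKcard j]
  refine card_nsmul_le_sum_add_sum_of_isClique hw (hΦ.1.1 _ (hKmem j)).1 (hΦ.1.1 _ (hKmem j')).1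
    (hdisj hne) ((hKcard j).trans (hKcard j').symm) fun C hC hC_clique => ?_
  exact hΦ.card_le_of_isClique_of_subset_union_s3 (hKmem j) (hKmem j') (hKcard j' ▸ hik)
    (by rw [hKcard, hKcard]) le_rfl hC_clique hC

/-- **Proposition.** Under the Ore-type condition, if `K₁, …, K_p` are `p ≥ 2` distinct
cliques of order `i ∈ [1, k-1]` in a maximal `k`-clique-cover `Φ` of `𝒢`, then
`Σ_{v ∈ V(K₁) ∪ … ∪ V(K_p)} d(v) ≥ p·i·(1 - 1/(k-1) + γ - d - 2ε)·ℓ`. -/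
theorem degree_sum_cliques_lower_bound {V : Type*} [Fintype V] [DecidableEq V]
    (G : SimpleGraph V) [DecidableRel G.Adj]
    (k : ℕ) (hk : 2 ≤ k) (γ d ε : ℝ) (hγ : 0 ≤ γ) (hd : 0 ≤ d) (hε : 0 ≤ ε)
    (hOre : ∀ x y : V, x ≠ y → ¬ G.Adj x y →
      2 * (1 - 1 / ((k : ℝ) - 1) + γ - d - 2 * ε) * (Fintype.card V) ≤
        (G.degree x : ℝ) + (G.degree y : ℝ))
    (Φ : Finset (Finset V)) (hΦ : IsMaxCliqueCover G k Φ)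
    (i : ℕ) (hi1 : 1 ≤ i) (hik : i ≤ k - 1)
    (p : ℕ) (hp : 2 ≤ p) (K : Fin p → Finset V) (hKinj : Function.Injective K)
    (hKmem : ∀ j, K j ∈ Φ) (hKcard : ∀ j, (K j).card = i) :
    (p : ℝ) * i * (1 - 1 / ((k : ℝ) - 1) + γ - d - 2 * ε) * (Fintype.card V) ≤
      ∑ v ∈ Finset.univ.biUnion (fun j => K j), (G.degree v : ℝ) := by
  have : Nontrivial (Fin p) := Fin.nontrivial_iff_two_le.2 hp
  have hbound := degree_sum_cliques_lower_bound_general hOre hΦ (by omega) hKinj hKmem hKcard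
  simp only [Fintype.card_fin, nsmul_eq_mul, Nat.cast_ofNat] at hbound
  linarith
end

section
/- Let k ≥ 2 be an integer and let γ, d, ε be nonnegative reals. Let 𝒢 be a graph on ℓ vertices such that d(x) + d(y) ≥ 2(1 − 1/(k−1) + γ − d − 2ε)·ℓ for all nonadjacent x, y ∈ V(𝒢), let Φ be a maximal k-clique-cover of 𝒢 with φ_j = |Φ_j|/ℓ, let i₀ = min{ i : |Φ_i| ≥ k }, and assume i₀ < k and Φ_j = ∅ for j < i₀. Define s by the identity φ_k = Σ_{j=2}^{k−i₀} (j−1)·φ_{k−j} + (k−1)γ + s. Fix i with 1 ≤ i ≤ k − i₀, and call a clique K ∈ Φ_{k−i} eligible if K is not over-connected to any clique in Φ_k; for an eligible K let Λ(K) be the set of cliques in Φ_k that are well-connected to K. Then for all eligible K ∈ Φ_{k−i}, with at most one exception, |Λ(K)|/ℓ ≥ (k−1)γ + ((i−1)/(k−1))·s + Σ_{2≤j≤i} (j−1)·φ_{k−j} + (i−1)·Σ_{i<j≤k−i₀} φ_{k−j} − (k−i)(d + 2ε). -/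
/-- `e(A, B) = Σ_{v ∈ A} |N(v) ∩ B|`. -/
def eBetween {V : Type*} (G : SimpleGraph V) [DecidableRel G.Adj] (A B : Finset V) : ℕ :=
  ∑ v ∈ A, (B.filter fun u => G.Adj v u).card

/-- `K` (of order `i`) is well-connected to `K'` (of order `j`): every vertex of `K` has
exactly `j - 1` neighbours in `K'`. -/
def WellConn {V : Type*} (G : SimpleGraph V) [DecidableRel G.Adj] (K K' : Finset V) : Prop :=
  ∀ v ∈ K, (K'.filter fun u => G.Adj v u).card = K'.card - 1

/-- `K` is over-connected to `K'`: `e(K, K') ≥ |K|(|K'| - 1)` but `K` is not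
well-connected to `K'`. -/
def OverConn {V : Type*} (G : SimpleGraph V) [DecidableRel G.Adj] (K K' : Finset V) : Prop :=
  K.card * (K'.card - 1) ≤ eBetween G K K' ∧ ¬ WellConn G K K'

/-!
Every clique `C` with `|C| ≤ k` meets some `S ∈ Φ` with `|S| ≥ |C|`: otherwise adding `C` to `Φ`
and cutting it out of the members it meets would improve `Φ` lexicographically. Consequently, for
`A, B ∈ Φ` with `|A| ≤ |B| < k`, each vertex of `A` has a non-neighbour in `B`, and if moreover
`|A| = |B|` and `A ≠ B`, Hall's condition yields a perfect matching of non-edges between `A` and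
`B`. By the matching and the degree condition, all cliques of `Φ` of a given order `< k`, except
at most one, have average degree at least half the Ore bound.

For such an eligible `K`, count the edges from `K` to the members of `Φ`: at least `min(|K|, |S|)`
pairs are missing at every `S ∈ Φ`, and one more if `|S| = k` and `S ∉ Λ(K)`. Hence
`∑_{v ∈ K} d(v) + ∑_{S ∈ Φ} min(|K|, |S|) + |Φ_k| ≤ |K| ℓ + |Λ(K)|`.
Divide by `ℓ` and write `|K| = k - i`, `|S| = k - j`. Since
`(k - 1) min(k - i, k - j) = (k - i)(k - j) - (i - 1)(j - 1) + (k - 1) min(i - 1, j - 1)`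
and `∑ (k - j) φ_{k-j} = 1`, the sum of minima turns into the weights of the claimed bound.
-/

open Finset

section Exchange

variable {V : Type*} {G : SimpleGraph V} {k : ℕ} {Φ : Finset (Finset V)} {A B C S T : Finset V}

theorem IsCliqueCover.eq_of_mem_of_mem (hΦ : IsCliqueCover G k Φ) (hS : S ∈ Φ) (hT : T ∈ Φ)
    {v : V} (hvS : v ∈ S) (hvT : v ∈ T) : S = T :=
  hΦ.2.1.eq hS hT (not_disjoint_iff.2 ⟨v, hvS, hvT⟩)

theorem IsCliqueCover.nonempty_of_mem (hΦ : IsCliqueCover G k Φ) (hS : S ∈ Φ) : S.Nonempty :=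
  card_pos.1 (hΦ.1 S hS).2.1

theorem IsCliqueCover.sum_card_eq [Fintype V] (hΦ : IsCliqueCover G k Φ) :
    ∑ S ∈ Φ, #S = Fintype.card V := by
  classical
  have hunion : Φ.biUnion id = univ := by
    ext v
    simpa using hΦ.2.2 v
  rw [← card_univ, ← hunion]
  exact (card_biUnion hΦ.2.1).symm

variable [DecidableEq V]

/-- The family obtained from `Φ` by cutting `C` out of all members and adding `C` as a new one.
Members swallowed by `C` leave no empty set behind, so this turns clique covers into clique
covers. -/
def exchange (Φ : Finset (Finset V)) (C : Finset V) : Finset (Finset V) :=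
  insert C ((Φ.image (· \ C)).erase ∅)

theorem mem_exchange : T ∈ exchange Φ C ↔ T = C ∨ T ≠ ∅ ∧ ∃ S ∈ Φ, S \ C = T := by
  simp only [exchange, mem_insert, mem_erase, mem_image]

theorem mem_exchange_of_disjoint (hS : S ∈ Φ) (hne : S.Nonempty) (hSC : Disjoint S C) :
    S ∈ exchange Φ C :=
  mem_exchange.2 (.inr ⟨hne.ne_empty, S, hS, sdiff_eq_self_of_disjoint hSC⟩)

theorem pairwiseDisjoint_exchange (hΦ : (Φ : Set (Finset V)).Pairwise fun S T => Disjoint S T) :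
    (exchange Φ C : Set (Finset V)).Pairwise fun S T => Disjoint S T := by
  intro S hS T hT hST
  rcases mem_exchange.1 hS with rfl | ⟨-, S', hS', rfl⟩ <;>
    rcases mem_exchange.1 hT with rfl | ⟨-, T', hT', rfl⟩
  · exact absurd rfl hST
  · exact disjoint_sdiff
  · exact sdiff_disjoint
  · exact (hΦ hS' hT' (ne_of_apply_ne (· \ C) hST)).mono sdiff_subset sdiff_subset

theorem IsCliqueCover.exchange (hΦ : IsCliqueCover G k Φ) (hC : G.IsClique (C : Set V))
    (hne : C.Nonempty) (hCk : #C ≤ k) : IsCliqueCover G k (exchange Φ C) := by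
  refine ⟨fun T hT => ?_, pairwiseDisjoint_exchange hΦ.2.1, fun v => ?_⟩
  · rcases mem_exchange.1 hT with rfl | ⟨hT0, S, hS, rfl⟩
    · exact ⟨hC, hne.card_pos, hCk⟩
    · obtain ⟨hSclique, -, hSk⟩ := hΦ.1 S hS
      exact ⟨hSclique.subset (coe_subset.2 sdiff_subset),
        (nonempty_iff_ne_empty.2 hT0).card_pos, (card_le_card sdiff_subset).trans hSk⟩
  · by_cases hv : v ∈ C
    · exact ⟨C, mem_exchange.2 (.inl rfl), hv⟩
    · obtain ⟨S, hS, hvS⟩ := hΦ.2.2 v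
      have hvSC : v ∈ S \ C := mem_sdiff.2 ⟨hvS, hv⟩
      exact ⟨S \ C, mem_exchange.2 (.inr ⟨ne_empty_of_mem hvSC, S, hS, rfl⟩), hvSC⟩

theorem filter_card_eq_subset_exchange (hne : C.Nonempty)
    (hlt : ∀ S ∈ Φ, ¬ Disjoint S C → #S < #C) {t : ℕ} (ht : #C ≤ t) :
    {S ∈ Φ | #S = t} ⊆ {S ∈ exchange Φ C | #S = t} := by
  intro S hS
  obtain ⟨hSΦ, rfl⟩ := mem_filter.1 hS
  have hSC : Disjoint S C := by_contra fun h => (hlt S hSΦ h).not_ge ht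
  exact mem_filter.2
    ⟨mem_exchange_of_disjoint hSΦ (card_pos.1 (hne.card_pos.trans_le ht)) hSC, rfl⟩

theorem coverVec_exchange (hne : C.Nonempty) (hlt : ∀ S ∈ Φ, ¬ Disjoint S C → #S < #C)
    {t : ℕ} (ht : #C < t) : coverVec (exchange Φ C) t = coverVec Φ t := by
  refine congrArg card (Subset.antisymm (fun T hT => ?_)
    (filter_card_eq_subset_exchange hne hlt ht.le))
  obtain ⟨hTΨ, rfl⟩ := mem_filter.1 hT
  rcases mem_exchange.1 hTΨ with rfl | ⟨-, S, hS, rfl⟩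
  · exact absurd ht (lt_irrefl _)
  · have hSC : Disjoint S C :=
      by_contra fun h => ((hlt S hS h).trans ht).not_ge (card_le_card sdiff_subset)
    rw [sdiff_eq_self_of_disjoint hSC]
    exact mem_filter.2 ⟨hS, rfl⟩

theorem coverVec_lt_coverVec_exchange (hne : C.Nonempty)
    (hlt : ∀ S ∈ Φ, ¬ Disjoint S C → #S < #C) :
    coverVec Φ #C < coverVec (exchange Φ C) #C := by
  refine card_lt_card ((ssubset_iff_of_subset (filter_card_eq_subset_exchange hne hlt le_rfl)).2
    ⟨C, mem_filter.2 ⟨mem_exchange.2 (.inl rfl), rfl⟩, fun hC => ?_⟩)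
  exact (hlt C (mem_filter.1 hC).1 (disjoint_self_iff_empty C |>.not.2 hne.ne_empty)).false

end Exchange

section NonEdges

variable {V : Type*} {G : SimpleGraph V} {k : ℕ} {Φ : Finset (Finset V)} {A B C K S : Finset V}

theorem IsMaxCliqueCover.exists_card_le_not_disjoint (hΦ : IsMaxCliqueCover G k Φ)
    (hC : G.IsClique (C : Set V)) (hne : C.Nonempty) (hCk : #C ≤ k) :
    ∃ S ∈ Φ, ¬ Disjoint S C ∧ #C ≤ #S := by
  classical
  by_contra! hlt
  exact (coverVec_lt_coverVec_exchange hne hlt).not_ge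
    (hΦ.2 _ (hΦ.1.exchange hC hne hCk) _ hne.card_pos hCk
      fun _ ht _ => coverVec_exchange hne hlt ht)

theorem IsMaxCliqueCover.card_le_max_of_subset_union [DecidableEq V] (hΦ : IsMaxCliqueCover G k Φ)
    (hA : A ∈ Φ) (hB : B ∈ Φ) (hAk : #A < k) (hBk : #B < k)
    (hC : G.IsClique (C : Set V)) (hCAB : C ⊆ A ∪ B) : #C ≤ max #A #B := by
  by_contra! hlt
  obtain ⟨D, hDC, hD⟩ := exists_subset_card_eq (Nat.succ_le_of_lt hlt)
  obtain ⟨S, hS, hSD, hDS⟩ := hΦ.exists_card_le_not_disjoint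
    (hC.subset (coe_subset.2 hDC)) (card_pos.1 (by omega)) (by omega)
  obtain ⟨v, hvS, hvD⟩ := not_disjoint_iff.1 hSD
  rcases mem_union.1 (hCAB (hDC hvD)) with hv | hv
  · cases hΦ.1.eq_of_mem_of_mem hS hA hvS hv
    omega
  · cases hΦ.1.eq_of_mem_of_mem hS hB hvS hv
    omega

theorem IsMaxCliqueCover.exists_mem_not_adj (hΦ : IsMaxCliqueCover G k Φ) (hA : A ∈ Φ)
    (hB : B ∈ Φ) (hAB : #A ≤ #B) (hBk : #B < k) {v : V} (hv : v ∈ A) :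
    ∃ u ∈ B, ¬ G.Adj v u := by
  classical
  by_contra! hadj
  have hvB : v ∉ B := fun h => G.irrefl (hadj v h)
  have hclique : G.IsClique (insert v B : Finset V) := by
    rw [coe_insert, SimpleGraph.isClique_insert]
    exact ⟨(hΦ.1.1 B hB).1, fun u hu _ => hadj u hu⟩
  have hcard := hΦ.card_le_max_of_subset_union hA hB (hAB.trans_lt hBk) hBk hclique
    (insert_subset (mem_union_left _ hv) subset_union_right)
  rw [card_insert_of_notMem hvB, max_eq_right hAB] at hcard
  omega

theorem isClique_union_commonNeighbors [DecidableEq V] [DecidableRel G.Adj]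
    (hA : G.IsClique (A : Set V)) (hB : G.IsClique (B : Set V)) :
    G.IsClique (A ∪ {u ∈ B | ∀ v ∈ A, G.Adj v u} : Finset V) := by
  intro x hx y hy hxy
  simp only [coe_union, coe_filter, Set.mem_union, mem_coe, Set.mem_ofPred_eq] at hx hy
  rcases hx with hx | ⟨hxB, hx⟩ <;> rcases hy with hy | ⟨hyB, hy⟩
  · exact hA hx hy hxy
  · exact hy x hx
  · exact (hx y hy).symm
  · exact hB hxB hyB hxy

theorem card_le_card_filter_exists_not_adj [DecidableEq V] [DecidableRel G.Adj]
    (hA : G.IsClique (A : Set V)) (hB : G.IsClique (B : Set V)) (hAB : Disjoint A B)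
    (hmax : ∀ C ⊆ A ∪ B, G.IsClique (C : Set V) → #C ≤ #B) :
    #A ≤ #{u ∈ B | ∃ v ∈ A, ¬ G.Adj v u} := by
  have hclique := hmax _ (union_subset_union_right (filter_subset _ B))
    (isClique_union_commonNeighbors hA hB)
  rw [card_union_of_disjoint (hAB.mono_right (filter_subset _ B)),
    ← card_filter_add_card_filter_not (s := B) fun u => ∀ v ∈ A, G.Adj v u] at hclique
  simpa [add_comm] using hclique

theorem exists_equiv_not_adj_of_forall_card_le [DecidableEq V] (hA : G.IsClique (A : Set V))
    (hB : G.IsClique (B : Set V)) (hAB : Disjoint A B) (hcard : #A = #B)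
    (hmax : ∀ C ⊆ A ∪ B, G.IsClique (C : Set V) → #C ≤ #B) :
    ∃ e : A ≃ B, ∀ a : A, ¬ G.Adj a (e a) := by
  classical
  have hHall (T : Finset A) : #T ≤ #(T.biUnion fun a => {u ∈ B | ¬ G.Adj a u}) := by
    have hTA : T.map (.subtype _) ⊆ A := map_subtype_subset T
    have hle := card_le_card_filter_exists_not_adj (hA.subset (coe_subset.2 hTA)) hB
      (hAB.mono_left hTA) fun C hC => hmax C (hC.trans (union_subset_union_left hTA))
    rw [card_map] at hle
    refine hle.trans (card_le_card fun u => ?_)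
    simp only [mem_filter, mem_map, mem_biUnion]
    rintro ⟨hu, _, ⟨a, haT, rfl⟩, hau⟩
    exact ⟨a, haT, hu, hau⟩
  obtain ⟨f, hf, hfB⟩ := (all_card_le_biUnion_card_iff_exists_injective _).1 hHall
  let g : A → B := fun a => ⟨f a, (mem_filter.1 (hfB a)).1⟩
  have hg : g.Bijective := (Fintype.bijective_iff_injective_and_card g).2
    ⟨fun a b hab => hf (congrArg Subtype.val hab), by simpa using hcard⟩
  exact ⟨.ofBijective g hg, fun a => (mem_filter.1 (hfB a)).2⟩

theorem IsMaxCliqueCover.exists_equiv_not_adj (hΦ : IsMaxCliqueCover G k Φ) (hA : A ∈ Φ)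
    (hB : B ∈ Φ) (hAB : A ≠ B) (hcard : #A = #B) (hBk : #B < k) :
    ∃ e : A ≃ B, ∀ a : A, ¬ G.Adj a (e a) := by
  classical
  refine exists_equiv_not_adj_of_forall_card_le (hΦ.1.1 A hA).1 (hΦ.1.1 B hB).1
    (hΦ.1.2.1 hA hB hAB) hcard fun C hC hclique => ?_
  simpa [hcard] using
    hΦ.card_le_max_of_subset_union hA hB (hcard.trans_lt hBk) hBk hclique hC

end NonEdges

section DegreeSums

variable {V : Type*} [Fintype V] {G : SimpleGraph V} [DecidableRel G.Adj] {k : ℕ}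
  {Φ : Finset (Finset V)} {A B : Finset V} {D : ℝ}

theorem IsMaxCliqueCover.two_mul_le_sum_degree_add_sum_degree (hΦ : IsMaxCliqueCover G k Φ)
    (hOre : ∀ x y : V, x ≠ y → ¬ G.Adj x y → 2 * D ≤ (G.degree x : ℝ) + G.degree y)
    (hA : A ∈ Φ) (hB : B ∈ Φ) (hAB : A ≠ B) (hcard : #A = #B) (hBk : #B < k) :
    2 * (#B * D) ≤ ∑ v ∈ A, (G.degree v : ℝ) + ∑ v ∈ B, (G.degree v : ℝ) := by
  obtain ⟨e, he⟩ := hΦ.exists_equiv_not_adj hA hB hAB hcard hBk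
  have hne (a : A) : (a : V) ≠ e a :=
    fun heq => disjoint_left.1 (hΦ.1.2.1 hA hB hAB) a.2 (heq ▸ (e a).2)
  calc 2 * (#B * D) = ∑ _a : A, 2 * D := by
        rw [sum_const, card_univ, Fintype.card_coe, nsmul_eq_mul, hcard, mul_left_comm]
    _ ≤ ∑ a : A, ((G.degree (a : V) : ℝ) + G.degree (e a : V)) :=
        sum_le_sum fun a _ => hOre _ _ (hne a) (he a)
    _ = ∑ v ∈ A, (G.degree v : ℝ) + ∑ v ∈ B, (G.degree v : ℝ) := by
        rw [sum_add_distrib, e.sum_comp fun b : B => (G.degree (b : V) : ℝ),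
          sum_coe_sort A fun v => (G.degree v : ℝ), sum_coe_sort B fun v => (G.degree v : ℝ)]

theorem IsMaxCliqueCover.exists_forall_ne_le_sum_degree (hΦ : IsMaxCliqueCover G k Φ)
    (hOre : ∀ x y : V, x ≠ y → ¬ G.Adj x y → 2 * D ≤ (G.degree x : ℝ) + G.degree y)
    {m : ℕ} (hm : m < k) :
    ∃ K₀ : Finset V, ∀ K ∈ Φ, #K = m → K ≠ K₀ → m * D ≤ ∑ v ∈ K, (G.degree v : ℝ) := by
  by_cases! h : ∃ K₀ ∈ Φ, #K₀ = m ∧ ∑ v ∈ K₀, (G.degree v : ℝ) < m * D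
  · obtain ⟨K₀, hK₀, rfl, hlt⟩ := h
    refine ⟨K₀, fun K hK hcard hne => ?_⟩
    linarith [hΦ.two_mul_le_sum_degree_add_sum_degree hOre hK hK₀ hne hcard hm]
  · exact ⟨∅, fun K hK hcard _ => h K hK hcard⟩

end DegreeSums

section EdgeCounts

variable {V : Type*} {G : SimpleGraph V} [DecidableRel G.Adj] {k : ℕ} {Φ : Finset (Finset V)}
  {A B K S : Finset V}

theorem eBetween_comm (A B : Finset V) : eBetween G A B = eBetween G B A := by
  simp only [eBetween, card_filter]
  rw [sum_comm]
  simp only [G.adj_comm]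

theorem eBetween_add_card_le (h : ∀ v ∈ A, ∃ u ∈ B, ¬ G.Adj v u) :
    eBetween G A B + #A ≤ #A * #B := by
  rw [eBetween, card_eq_sum_ones, ← sum_add_distrib, ← card_eq_sum_ones, ← smul_eq_mul]
  exact sum_le_card_nsmul A _ _ fun v hv =>
    Nat.succ_le_of_lt (card_lt_card (filter_ssubset.2 (h v hv)))

theorem WellConn.eBetween_eq (h : WellConn G K S) : eBetween G K S = #K * (#S - 1) := by
  rw [eBetween, sum_congr rfl h, sum_const, smul_eq_mul]

theorem IsMaxCliqueCover.eBetween_add_min_le (hΦ : IsMaxCliqueCover G k Φ) (hA : A ∈ Φ)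
    (hB : B ∈ Φ) (hAk : #A < k) (hBk : #B < k) :
    eBetween G A B + min #A #B ≤ #A * #B := by
  rcases le_total #A #B with h | h
  · rw [min_eq_left h]
    exact eBetween_add_card_le fun v => hΦ.exists_mem_not_adj hA hB h hBk
  · rw [min_eq_right h, eBetween_comm, mul_comm]
    exact eBetween_add_card_le fun v => hΦ.exists_mem_not_adj hB hA h hAk

open Classical in
theorem eBetween_add_card_add_one_le (hS : S.Nonempty) (h : ¬ OverConn G K S) :
    eBetween G K S + #K + 1 ≤ #K * #S + if WellConn G K S then 1 else 0 := by
  have hmul : #K * (#S - 1) + #K = #K * #S := by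
    rw [← Nat.mul_succ, Nat.succ_eq_add_one, Nat.sub_add_cancel hS.card_pos]
  split_ifs with hwell
  · rw [hwell.eBetween_eq, hmul]
  · have hlt : eBetween G K S < #K * (#S - 1) := not_le.1 fun hle => h ⟨hle, hwell⟩
    omega

open Classical in
theorem IsMaxCliqueCover.eBetween_add_min_add_ite_le (hΦ : IsMaxCliqueCover G k Φ)
    (hK : K ∈ Φ) (hKk : #K < k) (hover : ∀ S ∈ Φ, #S = k → ¬ OverConn G K S) (hS : S ∈ Φ) :
    eBetween G K S + min #K #S + (if #S = k then 1 else 0) ≤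
      #K * #S + if #S = k ∧ WellConn G K S then 1 else 0 := by
  rcases (hΦ.1.1 S hS).2.2.eq_or_lt with hSk | hSk
  · simpa [hSk, hKk.le] using
      eBetween_add_card_add_one_le (hΦ.1.nonempty_of_mem hS) (hover S hS hSk)
  · simpa [hSk.ne] using hΦ.eBetween_add_min_le hK hS hKk hSk

theorem IsCliqueCover.sum_degree_eq [Fintype V] (hΦ : IsCliqueCover G k Φ) (K : Finset V) :
    ∑ v ∈ K, G.degree v = ∑ S ∈ Φ, eBetween G K S := by
  classical
  simp only [eBetween]
  rw [sum_comm]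
  refine sum_congr rfl fun v _ => ?_
  rw [← card_biUnion fun S hS T hT hST =>
    (hΦ.2.1 hS hT hST).mono (filter_subset _ S) (filter_subset _ T),
    ← G.card_neighborFinset_eq_degree]
  congr 1
  ext u
  obtain ⟨S, hS, hu⟩ := hΦ.2.2 u
  simp only [SimpleGraph.mem_neighborFinset, mem_biUnion, mem_filter]
  exact ⟨fun h => ⟨S, hS, hu, h⟩, fun ⟨_, _, _, h⟩ => h⟩

theorem IsMaxCliqueCover.sum_degree_add_sum_min_le [Fintype V] (hΦ : IsMaxCliqueCover G k Φ)
    (hK : K ∈ Φ) (hKk : #K < k) (hover : ∀ S ∈ Φ, #S = k → ¬ OverConn G K S) :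
    ∑ v ∈ K, G.degree v + ∑ S ∈ Φ, min #K #S + coverVec Φ k ≤
      #K * Fintype.card V + {S | S ∈ Φ ∧ #S = k ∧ WellConn G K S}.ncard := by
  classical
  have hΛ : {S | S ∈ Φ ∧ #S = k ∧ WellConn G K S}.ncard = #{S ∈ Φ | #S = k ∧ WellConn G K S} := by
    rw [← Set.ncard_coe_finset, coe_filter]
  rw [hΛ, coverVec, card_filter, card_filter, hΦ.1.sum_degree_eq, ← hΦ.1.sum_card_eq, mul_sum,
    ← sum_add_distrib, ← sum_add_distrib, ← sum_add_distrib]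
  exact sum_le_sum fun S => hΦ.eBetween_add_min_add_ite_le hK hKk hover

end EdgeCounts

section Densities

variable {V : Type*} {G : SimpleGraph V} {k : ℕ} {Φ : Finset (Finset V)}

theorem IsCliqueCover.sum_card_eq_sum_coverVec (hΦ : IsCliqueCover G k Φ) {M : Type*}
    [AddCommMonoid M] (f : ℕ → M) :
    ∑ S ∈ Φ, f #S = ∑ j ∈ range k, coverVec Φ (k - j) • f (k - j) := by
  have hmaps : ∀ S ∈ Φ, k - #S ∈ range k := fun S hS => by
    have := hΦ.1 S hS
    rw [mem_range]
    omega
  rw [← sum_fiberwise_of_maps_to hmaps]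
  refine sum_congr rfl fun j hj => ?_
  have hfiber : {S ∈ Φ | k - #S = j} = {S ∈ Φ | #S = k - j} := filter_congr fun S hS => by
    have := hΦ.1 S hS
    rw [mem_range] at hj
    omega
  rw [hfiber, coverVec]
  exact sum_eq_card_nsmul fun S hS => by rw [(mem_filter.1 hS).2]

theorem IsCliqueCover.sum_div_eq_sum_mul_coverVec_div (hΦ : IsCliqueCover G k Φ) (f : ℝ → ℝ)
    (x : ℝ) :
    (∑ S ∈ Φ, f #S) / x = ∑ j ∈ range k, f (k - j) * (coverVec Φ (k - j) / x) := by
  rw [hΦ.sum_card_eq_sum_coverVec fun t => f t, sum_div]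
  refine sum_congr rfl fun j hj => ?_
  rw [Nat.cast_sub (mem_range.1 hj).le, nsmul_eq_mul, mul_comm, mul_div_assoc]

theorem IsCliqueCover.sum_mul_coverVec_div_card_eq_one [Fintype V] [Nonempty V]
    (hΦ : IsCliqueCover G k Φ) :
    ∑ j ∈ range k, ((k : ℝ) - j) * ((coverVec Φ (k - j) : ℝ) / Fintype.card V) = 1 := by
  rw [← hΦ.sum_div_eq_sum_mul_coverVec_div fun x => x, ← Nat.cast_sum, hΦ.sum_card_eq,
    div_self (Nat.cast_ne_zero.2 Fintype.card_ne_zero)]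

theorem IsMaxCliqueCover.le_ncard_wellConn_div [Fintype V] [DecidableRel G.Adj]
    (hΦ : IsMaxCliqueCover G k Φ) {K : Finset V} (hK : K ∈ Φ) (hKk : #K < k)
    (hover : ∀ S ∈ Φ, #S = k → ¬ OverConn G K S) {δ : ℝ}
    (hdeg : #K * (δ * Fintype.card V) ≤ ∑ v ∈ K, (G.degree v : ℝ)) :
    #K * δ - #K + ((coverVec Φ k : ℝ) / Fintype.card V +
        ∑ j ∈ range k, min (#K : ℝ) (k - j) * ((coverVec Φ (k - j) : ℝ) / Fintype.card V)) ≤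
      ({S | S ∈ Φ ∧ #S = k ∧ WellConn G K S}.ncard : ℝ) / Fintype.card V := by
  have : Nonempty V := (hΦ.1.nonempty_of_mem hK).to_type
  have hℓ : (0 : ℝ) < Fintype.card V := Nat.cast_pos.2 Fintype.card_pos
  have hcount : ∑ v ∈ K, (G.degree v : ℝ) + ∑ S ∈ Φ, min (#K : ℝ) #S + coverVec Φ k ≤
      #K * Fintype.card V + {S | S ∈ Φ ∧ #S = k ∧ WellConn G K S}.ncard := by
    exact_mod_cast hΦ.sum_degree_add_sum_min_le hK hKk hover
  rw [← hΦ.1.sum_div_eq_sum_mul_coverVec_div (min (#K : ℝ)), ← add_div, le_div_iff₀ hℓ, add_mul,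
    div_mul_cancel₀ _ hℓ.ne']
  linarith

theorem sum_Icc_sub_eq_sum_Ico_of_coverVec_eq_zero (hk : 0 < k) {i₀ : ℕ} (hi₀ : 1 ≤ i₀)
    (hempty : ∀ j, 1 ≤ j → j < i₀ → coverVec Φ j = 0) {M : Type*} [AddCommMonoid M] {f : ℕ → M}
    (hf : ∀ j, coverVec Φ (k - j) = 0 → f j = 0) (a : ℕ) :
    ∑ j ∈ Icc a (k - i₀), f j = ∑ j ∈ Ico a k, f j := by
  refine sum_subset (fun j => ?_) fun j hj hj' => hf j (hempty _ ?_ ?_) <;>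
    simp only [mem_Icc, mem_Ico] at * <;> omega

end Densities

section Weights

theorem sub_one_mul_min_sub {R : Type*} [CommRing R] [LinearOrder R] [IsOrderedRing R]
    (k i j : R) :
    (k - 1) * min (k - i) (k - j) =
      (k - i) * (k - j) - (i - 1) * (j - 1) + (k - 1) * min (i - 1) (j - 1) := by
  rcases le_total i j with h | h
  · rw [min_eq_right (sub_le_sub_left h k), min_eq_left (sub_le_sub_right h 1)]
    ring
  · rw [min_eq_left (sub_le_sub_left h k), min_eq_right (sub_le_sub_right h 1)]
    ring

theorem sum_range_sub_one_mul {R : Type*} [Ring R] {k : ℕ} (hk : 1 < k) (φ : ℕ → R) :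
    ∑ j ∈ range k, ((j : R) - 1) * φ j = ∑ j ∈ Ico 2 k, ((j : R) - 1) * φ j - φ 0 := by
  rw [range_eq_Ico, sum_eq_sum_Ico_succ_bot (by omega), sum_eq_sum_Ico_succ_bot hk]
  simp only [Nat.cast_zero, Nat.cast_one, sub_self, zero_mul, zero_add]
  rw [zero_sub, neg_one_mul, neg_add_eq_sub]

theorem sum_range_min_sub_one_mul {R : Type*} [CommRing R] [LinearOrder R]
    [IsStrictOrderedRing R] {i k : ℕ} (hi : 1 ≤ i) (hik : i < k) (φ : ℕ → R) :
    ∑ j ∈ range k, min ((i : R) - 1) (j - 1) * φ j =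
      ∑ j ∈ Icc 2 i, ((j : R) - 1) * φ j + (i - 1) * ∑ j ∈ Ico (i + 1) k, φ j - φ 0 := by
  have hsmall : ∑ j ∈ range (i + 1), min ((i : R) - 1) (j - 1) * φ j =
      ∑ j ∈ range (i + 1), ((j : R) - 1) * φ j := sum_congr rfl fun j hj => by
    rw [min_eq_right (sub_le_sub_right (Nat.cast_le.2 (mem_range_succ_iff.1 hj)) 1)]
  have hlarge : ∑ j ∈ Ico (i + 1) k, min ((i : R) - 1) (j - 1) * φ j =
      (i - 1) * ∑ j ∈ Ico (i + 1) k, φ j := by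
    rw [mul_sum]
    refine sum_congr rfl fun j hj => ?_
    rw [min_eq_left (sub_le_sub_right (Nat.cast_le.2 (Nat.le_of_succ_le (mem_Ico.1 hj).1)) 1)]
  rw [← sum_range_add_sum_Ico _ hik, hsmall, hlarge, sum_range_sub_one_mul (Nat.lt_succ_of_le hi),
    Nat.succ_eq_add_one, Ico_add_one_right_eq_Icc]
  ring

theorem add_sum_min_mul_eq {F : Type*} [Field F] [LinearOrder F] [IsStrictOrderedRing F]
    {i k : ℕ} (hi : 1 ≤ i) (hik : i < k) {φ : ℕ → F}
    (hφ : ∑ j ∈ range k, ((k : F) - j) * φ j = 1) :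
    φ 0 + ∑ j ∈ range k, min ((k : F) - i) (k - j) * φ j =
      (k - i) / (k - 1) + (i - 1) / (k - 1) * (φ 0 - ∑ j ∈ Ico 2 k, ((j : F) - 1) * φ j)
        + ∑ j ∈ Icc 2 i, ((j : F) - 1) * φ j + (i - 1) * ∑ j ∈ Ico (i + 1) k, φ j := by
  have hk : (k : F) - 1 ≠ 0 := sub_ne_zero.2 (Nat.cast_ne_one.2 (by omega))
  have hweights : (k - 1) * ∑ j ∈ range k, min ((k : F) - i) (k - j) * φ j =
      (k - i) * ∑ j ∈ range k, ((k : F) - j) * φ j - (i - 1) * ∑ j ∈ range k, ((j : F) - 1) * φ j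
        + (k - 1) * ∑ j ∈ range k, min ((i : F) - 1) (j - 1) * φ j := by
    simp only [mul_sum, ← sum_sub_distrib, ← sum_add_distrib, ← mul_assoc, sub_one_mul_min_sub,
      ← sub_mul, ← add_mul]
  rw [hφ, sum_range_sub_one_mul (by omega), sum_range_min_sub_one_mul hi hik] at hweights
  refine mul_left_cancel₀ hk ?_
  rw [mul_add, hweights]
  field_simp
  ring

end Weights

theorem lambda_lower_bound_general {V : Type*} [Fintype V]
    (G : SimpleGraph V) [DecidableRel G.Adj] (k : ℕ) (γ d ε : ℝ)
    (hOre : ∀ x y : V, x ≠ y → ¬ G.Adj x y →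
      2 * (1 - 1 / ((k : ℝ) - 1) + γ - d - 2 * ε) * (Fintype.card V) ≤
        (G.degree x : ℝ) + (G.degree y : ℝ))
    (Φ : Finset (Finset V)) (hΦ : IsMaxCliqueCover G k Φ) (s : ℝ)
    (hs : (coverVec Φ k : ℝ) / (Fintype.card V : ℝ) =
      (∑ j ∈ Ico 2 k,
        ((j : ℝ) - 1) * ((coverVec Φ (k - j) : ℝ) / (Fintype.card V : ℝ)))
      + ((k : ℝ) - 1) * γ + s)
    (i : ℕ) (hi : 1 ≤ i) (hik : i < k) :
    ∃ K₀ : Finset V, ∀ K ∈ Φ, K.card = k - i →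
      (¬ ∃ K' ∈ Φ, K'.card = k ∧ OverConn G K K') →
      K ≠ K₀ →
      ((k : ℝ) - 1) * γ + (((i : ℝ) - 1) / ((k : ℝ) - 1)) * s
        + (∑ j ∈ Icc 2 i,
            ((j : ℝ) - 1) * ((coverVec Φ (k - j) : ℝ) / (Fintype.card V : ℝ)))
        + ((i : ℝ) - 1) * (∑ j ∈ Ico (i + 1) k,
            (coverVec Φ (k - j) : ℝ) / (Fintype.card V : ℝ))
        - ((k : ℝ) - (i : ℝ)) * (d + 2 * ε)
      ≤ ({S : Finset V | S ∈ Φ ∧ S.card = k ∧ WellConn G K S}.ncard : ℝ) /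
          (Fintype.card V : ℝ) := by
  obtain ⟨K₀, hK₀⟩ := hΦ.exists_forall_ne_le_sum_degree
    (fun x y hxy hadj => (mul_assoc _ _ _).symm.trans_le (hOre x y hxy hadj))
    (Nat.sub_lt (by omega) hi : k - i < k)
  refine ⟨K₀, fun K hK hKi hel hne => ?_⟩
  have : Nonempty V := (hΦ.1.nonempty_of_mem hK).to_type
  have hΛ := hΦ.le_ncard_wellConn_div hK (by omega) (fun S hS hSk h => hel ⟨S, hS, hSk, h⟩)
    (hKi ▸ hK₀ K hK hKi hne)
  have hweights := add_sum_min_mul_eq hi hik hΦ.1.sum_mul_coverVec_div_card_eq_one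
  rw [Nat.sub_zero] at hweights
  rw [hKi, Nat.cast_sub hik.le, hweights, hs] at hΛ
  have hk : (k : ℝ) - 1 ≠ 0 := sub_ne_zero.2 (Nat.cast_ne_one.2 (by omega))
  refine Eq.trans_le ?_ hΛ
  field_simp
  ring

/-- **Proposition (λᵢ lower bound).** For all eligible `K ∈ Φ_{k-i}` (those not
over-connected to any `k`-clique of `Φ`), with at most one exception,
`|Λ(K)|/ℓ ≥ (k-1)γ + ((i-1)/(k-1))s + Σ_{2≤j≤i}(j-1)φ_{k-j} + (i-1)Σ_{i<j≤k-i₀}φ_{k-j}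
 - (k-i)(d+2ε)`, where `Λ(K)` is the set of `k`-cliques of `Φ` well-connected to `K`. -/
theorem lambda_lower_bound {V : Type*} [Fintype V]
    (G : SimpleGraph V) [DecidableRel G.Adj]
    (k : ℕ) (hk : 2 ≤ k) (γ d ε : ℝ) (hγ : 0 ≤ γ) (hd : 0 ≤ d) (hε : 0 ≤ ε)
    (hOre : ∀ x y : V, x ≠ y → ¬ G.Adj x y →
      2 * (1 - 1 / ((k : ℝ) - 1) + γ - d - 2 * ε) * (Fintype.card V) ≤
        (G.degree x : ℝ) + (G.degree y : ℝ))
    (Φ : Finset (Finset V)) (hΦ : IsMaxCliqueCover G k Φ)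
    (i₀ : ℕ) (hi₀1 : 1 ≤ i₀) (hi₀k : i₀ < k)
    (hbig : k ≤ coverVec Φ i₀)
    (hempty : ∀ j, 1 ≤ j → j < i₀ → coverVec Φ j = 0)
    (s : ℝ)
    (hs : (coverVec Φ k : ℝ) / (Fintype.card V : ℝ) =
      (∑ j ∈ Finset.Icc 2 (k - i₀),
        ((j : ℝ) - 1) * ((coverVec Φ (k - j) : ℝ) / (Fintype.card V : ℝ)))
      + ((k : ℝ) - 1) * γ + s)
    (i : ℕ) (hi1 : 1 ≤ i) (hi2 : i ≤ k - i₀) :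
    ∃ K₀ : Finset V, ∀ K ∈ Φ, K.card = k - i →
      (¬ ∃ K' ∈ Φ, K'.card = k ∧ OverConn G K K') →
      K ≠ K₀ →
      ((k : ℝ) - 1) * γ + (((i : ℝ) - 1) / ((k : ℝ) - 1)) * s
        + (∑ j ∈ Finset.Icc 2 i,
            ((j : ℝ) - 1) * ((coverVec Φ (k - j) : ℝ) / (Fintype.card V : ℝ)))
        + ((i : ℝ) - 1) * (∑ j ∈ Finset.Icc (i + 1) (k - i₀),
            (coverVec Φ (k - j) : ℝ) / (Fintype.card V : ℝ))
        - ((k : ℝ) - (i : ℝ)) * (d + 2 * ε)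
      ≤ ({S : Finset V | S ∈ Φ ∧ S.card = k ∧ WellConn G K S}.ncard : ℝ) /
          (Fintype.card V : ℝ) := by
  rw [sum_Icc_sub_eq_sum_Ico_of_coverVec_eq_zero (by omega) hi₀1 hempty
    fun j hj => by simp [hj]] at hs ⊢
  exact lambda_lower_bound_general G k γ d ε hOre Φ hΦ s hs i hi1 (by omega)
end

section
/- Let D be a finite loopless directed graph in which every vertex has out-degree at least δ. Then D has a sink set of size at most |V(D)|/(δ + 1). -/
/-!
Order the vertices by reachability, so that a sink set is a cofinal set. Let `S` be a sink set of
minimum size. If two vertices of `S` reached a common vertex `x`, replacing both of them by `x`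
would give a smaller sink set, so the sets reachable from the vertices of `S` are pairwise
disjoint. Each contains a vertex together with its out-neighbours, hence at least `δ + 1` vertices.
-/

section Cofinal

variable {ι α : Type*}

lemma card_mul_le_encard_biUnion {S : Finset ι} {f : ι → Set α} {k : ℕ∞}
    (hf : (S : Set ι).PairwiseDisjoint f) (hk : ∀ i ∈ S, k ≤ (f i).encard) :
    S.card * k ≤ (⋃ i ∈ S, f i).encard :=
  calc (S.card : ℕ∞) * k = S.card • k := (nsmul_eq_mul _ _).symm
    _ ≤ ∑ i ∈ S, (f i).encard := S.card_nsmul_le_sum _ _ hk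
    _ = (⋃ i ∈ S, f i).encard :=
      (finsum_mem_coe_finset _ _).symm.trans (S.finite_toSet.encard_biUnion hf).symm

variable [Preorder α]

lemma isCofinal_insert_sdiff_pair {s : Set α} (hs : IsCofinal s) {a b x : α}
    (hax : a ≤ x) (hbx : b ≤ x) : IsCofinal (insert x (s \ {a, b})) := by
  intro u
  obtain ⟨c, hc, huc⟩ := hs u
  by_cases hcab : c ∈ ({a, b} : Set α)
  · have hcx : c ≤ x := by rcases hcab with rfl | rfl <;> assumption
    exact ⟨x, Set.mem_insert _ _, huc.trans hcx⟩
  · exact ⟨c, Set.mem_insert_of_mem _ ⟨hc, hcab⟩, huc⟩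

lemma pairwiseDisjoint_Ici_of_minimalFor_card {S : Finset α}
    (hS : MinimalFor (fun T : Finset α ↦ IsCofinal (T : Set α)) Finset.card S) :
    (S : Set α).PairwiseDisjoint Set.Ici := by
  classical
  intro a ha b hb hab
  refine Set.disjoint_left.2 fun x hax hbx ↦ ?_
  have hcofinal : IsCofinal ((insert x (S \ {a, b}) : Finset α) : Set α) := by
    push_cast
    exact isCofinal_insert_sdiff_pair hS.prop hax hbx
  have hcard : (S \ {a, b}).card + 2 = S.card := by
    rw [← Finset.card_pair hab]
    exact Finset.card_sdiff_add_card_eq_card (Finset.insert_subset ha (by simpa using hb))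
  have hinsert := Finset.card_insert_le x (S \ {a, b})
  exact hS.not_lt hcofinal (by omega)

lemma exists_isCofinal_card_mul_le_encard {T : Finset α} (hT : IsCofinal (T : Set α)) {k : ℕ∞}
    (hk : ∀ a : α, k ≤ (Set.Ici a).encard) :
    ∃ S : Finset α, IsCofinal (S : Set α) ∧ S.card * k ≤ ENat.card α := by
  obtain ⟨S, hS⟩ := exists_minimalFor_of_wellFoundedLT
    (fun S : Finset α ↦ IsCofinal (S : Set α)) Finset.card ⟨T, hT⟩
  have hdisjoint := pairwiseDisjoint_Ici_of_minimalFor_card hS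
  exact ⟨S, hS.prop, (card_mul_le_encard_biUnion hdisjoint fun a _ ↦ hk a).trans
    Set.encard_le_card⟩

end Cofinal

section Reachability

variable {V : Type*} (Adj : V → V → Prop)

/-- The reachability preorder of a digraph: `u ≤ v` when there is a directed walk from `u` to `v`.
The source set `W(v)` is then `Set.Iic v`, and sink sets are exactly the cofinal sets. -/
abbrev reachabilityPreorder : Preorder V where
  le := Relation.ReflTransGen Adj
  le_refl _ := .refl
  le_trans _ _ _ := .trans

variable {Adj}

lemma encard_outNeighbors_add_one_le_encard_reachable {v : V} (hv : ¬ Adj v v) :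
    {w | Adj v w}.encard + 1 ≤ {w | Relation.ReflTransGen Adj v w}.encard := by
  rw [← Set.encard_insert_of_notMem (show v ∉ {w | Adj v w} from hv)]
  exact Set.encard_le_encard (Set.insert_subset .refl fun _ ↦ .single)

end Reachability

/-- **Lemma (sink set).** Every finite loopless directed graph with minimum out-degree
at least `δ` has a sink set `S` (i.e. every vertex has a directed walk to some vertex of
`S`) of size at most `|V(D)|/(δ+1)`. -/
theorem sink_set_bound {V : Type*} [Fintype V]
    (Adj : V → V → Prop) (hloopless : ∀ v, ¬ Adj v v)
    (δ : ℕ) (hδ : ∀ v : V, δ ≤ {w : V | Adj v w}.ncard) :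
    ∃ S : Finset V,
      (∀ u : V, ∃ v ∈ S, Relation.ReflTransGen Adj u v) ∧
      (S.card : ℝ) ≤ (Fintype.card V : ℝ) / ((δ : ℝ) + 1) := by
  let _ : Preorder V := reachabilityPreorder Adj
  have hreach (v : V) : ((δ + 1 : ℕ) : ℕ∞) ≤ (Set.Ici v).encard :=
    calc ((δ + 1 : ℕ) : ℕ∞) ≤ ({w | Adj v w}.ncard + 1 : ℕ) := by gcongr; exact hδ v
      _ = {w | Adj v w}.encard + 1 := by rw [Nat.cast_succ, (Set.toFinite _).cast_ncard_eq]
      _ ≤ (Set.Ici v).encard := encard_outNeighbors_add_one_le_encard_reachable (hloopless v)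
  have huniv : IsCofinal ((Finset.univ : Finset V) : Set V) := by simp
  obtain ⟨S, hsink, hcard⟩ := exists_isCofinal_card_mul_le_encard huniv hreach
  refine ⟨S, hsink, ?_⟩
  rw [ENat.card_eq_coe_fintype_card] at hcard
  rw [le_div_iff₀ (by positivity)]
  exact_mod_cast hcard
end

section
/- Let G be a graph, let U₁ ⊆ V(G), let 0 ≤ ε₁ < 1/2, let i ≥ 1 be an integer, and let U_H be a nonempty subset of U₁ with |U_H| ≥ (1 − 2ε₁)|U₁|. Let δ₀ = min_{v ∈ U_H} |N(v) ∩ U₁| and let Δ₀ be the maximum degree of the induced subgraph G[U₁]. Then ν_i(G[U₁]) · 2(i+1) · Δ₀ ≥ (δ₀ − i + 1) · (1 − 2ε₁) · |U₁|, where ν_i(G[U₁]) is the maximum number of pairwise vertex-disjoint i-stars in G[U₁]. -/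
/-!
Let `A ⊆ U` be a set of vertices with at least `δ` neighbours in `U`, and let `Δ` be an upper bound
for the degrees in `G[U]`. Take an inclusion-maximal family of disjoint `t`-stars in `G[U]` and let
`C` be the set of vertices it covers. A vertex of `U` outside `C` has fewer than `t` neighbours in
`U \ C`, since otherwise it would be the centre of one more star. Hence each vertex of `A \ C` has
at least `δ + 1 - t` neighbours in `C`, and double counting the edges between `A \ C` and `C` gives
`|A \ C| (δ + 1 - t) ≤ |C| Δ`. Trivially `|A ∩ C| (δ + 1 - t) ≤ |C| Δ` as well, which is the source
of the factor `2`. Finally `|C|` is `t + 1` times the number of stars.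
-/

section StarTilings

open Finset

theorem card_mul_le_card_mul_add_of_sdiff {α : Type*} [DecidableEq α] (r : α → α → Prop)
    [DecidableRel r] {A C : Finset α} {k D : ℕ}
    (hk : ∀ a ∈ A \ C, k ≤ #{c ∈ C | r a c}) (hD : ∀ c ∈ C, #{a ∈ A | r a c} ≤ D) :
    #A * k ≤ #C * (D + k) := by
  have houtside : #(A \ C) * k ≤ #C * D := card_mul_le_card_mul r hk fun c hc ↦
    (card_le_card (filter_subset_filter _ sdiff_subset)).trans (hD c hc)
  have hinside : #(A ∩ C) * k ≤ #C * k := by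
    gcongr
    exact inter_subset_right
  calc #A * k = #(A \ C) * k + #(A ∩ C) * k := by rw [← add_mul, card_sdiff_add_card_inter]
    _ ≤ #C * D + #C * k := add_le_add houtside hinside
    _ = #C * (D + k) := by ring

variable {V : Type*} {G : SimpleGraph V} {U : Finset V} {t : ℕ}

/-- The pair `p = (centre, leaves)` is a copy of the star `K_{1,t}` in the induced subgraph `G[U]`.
-/
structure IsStarIn (G : SimpleGraph V) (U : Finset V) (t : ℕ) (p : V × Finset V) : Prop where
  center_mem : p.1 ∈ U
  leaves_subset : p.2 ⊆ U
  card_leaves : #p.2 = t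
  adj : ∀ v ∈ p.2, G.Adj p.1 v

theorem IsStarIn.center_notMem_leaves {p : V × Finset V} (hp : IsStarIn G U t p) : p.1 ∉ p.2 :=
  fun h ↦ (hp.adj _ h).ne rfl

variable [DecidableEq V] {𝒮 : Finset (V × Finset V)} {p : V × Finset V} {v : V}

/-- The vertex set of a star encoded as the pair `(centre, leaves)`. -/
def starVerts (p : V × Finset V) : Finset V :=
  insert p.1 p.2

/-- The set of vertices covered by a family of stars. -/
def coveredVerts (𝒮 : Finset (V × Finset V)) : Finset V :=
  𝒮.biUnion starVerts

/-- A family of pairwise vertex-disjoint copies of `K_{1,t}` in `G[U]`; the maximal size of such a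
family is `ν_t(G[U])`. -/
structure IsStarTiling (G : SimpleGraph V) (U : Finset V) (t : ℕ) (𝒮 : Finset (V × Finset V)) :
    Prop where
  isStarIn : ∀ p ∈ 𝒮, IsStarIn G U t p
  pairwiseDisjoint : (𝒮 : Set (V × Finset V)).PairwiseDisjoint starVerts

theorem IsStarIn.starVerts_subset (hp : IsStarIn G U t p) : starVerts p ⊆ U :=
  insert_subset hp.center_mem hp.leaves_subset

theorem IsStarIn.card_starVerts (hp : IsStarIn G U t p) : #(starVerts p) = t + 1 := by
  rw [starVerts, card_insert_of_notMem hp.center_notMem_leaves, hp.card_leaves]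

theorem starVerts_subset_coveredVerts (hp : p ∈ 𝒮) : starVerts p ⊆ coveredVerts 𝒮 :=
  subset_biUnion_of_mem starVerts hp

namespace IsStarTiling

theorem coveredVerts_subset (h𝒮 : IsStarTiling G U t 𝒮) : coveredVerts 𝒮 ⊆ U :=
  biUnion_subset.2 fun p hp ↦ (h𝒮.isStarIn p hp).starVerts_subset

theorem card_coveredVerts (h𝒮 : IsStarTiling G U t 𝒮) : #(coveredVerts 𝒮) = #𝒮 * (t + 1) := by
  rw [coveredVerts, card_biUnion h𝒮.pairwiseDisjoint,
    sum_const_nat fun p hp ↦ (h𝒮.isStarIn p hp).card_starVerts]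

theorem insert (h𝒮 : IsStarTiling G U t 𝒮) (hp : IsStarIn G U t p)
    (hdisj : Disjoint (starVerts p) (coveredVerts 𝒮)) : IsStarTiling G U t (insert p 𝒮) where
  isStarIn := (forall_mem_insert _ _ _).2 ⟨hp, h𝒮.isStarIn⟩
  pairwiseDisjoint := by
    rw [coe_insert]
    exact h𝒮.pairwiseDisjoint.insert fun q hq _ ↦
      hdisj.mono_right (starVerts_subset_coveredVerts hq)

variable (G U t) in
theorem exists_maximal : ∃ 𝒮, Maximal (IsStarTiling G U t) 𝒮 := by
  have hfinite : {𝒮 | IsStarTiling G U t 𝒮}.Finite := by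
    refine (U ×ˢ U.powerset).powerset.finite_toSet.subset fun 𝒮 h𝒮 ↦
      mem_powerset.2 fun p hp ↦ mem_product.2 ?_
    exact ⟨(h𝒮.isStarIn p hp).center_mem, mem_powerset.2 (h𝒮.isStarIn p hp).leaves_subset⟩
  exact hfinite.exists_maximal ⟨∅, by simp, by simp⟩

theorem not_disjoint_coveredVerts_of_maximal (h𝒮 : Maximal (IsStarTiling G U t) 𝒮)
    (hp : IsStarIn G U t p) : ¬ Disjoint (starVerts p) (coveredVerts 𝒮) := by
  intro hdisj
  have hmem : p ∈ 𝒮 := h𝒮.le_of_ge (h𝒮.prop.insert hp hdisj) (subset_insert p 𝒮)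
    (mem_insert_self p 𝒮)
  have hcenter : p.1 ∈ starVerts p := mem_insert_self p.1 p.2
  exact disjoint_left.1 hdisj hcenter (starVerts_subset_coveredVerts hmem hcenter)

variable [DecidableRel G.Adj]

theorem card_uncovered_neighbors_lt_of_maximal (h𝒮 : Maximal (IsStarTiling G U t) 𝒮)
    (hv : v ∈ U \ coveredVerts 𝒮) : #{u ∈ U \ coveredVerts 𝒮 | G.Adj v u} < t := by
  by_contra! hle
  obtain ⟨L, hL, hcard⟩ := exists_subset_card_eq hle
  have hsub : starVerts (v, L) ⊆ U \ coveredVerts 𝒮 :=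
    insert_subset hv (hL.trans (filter_subset _ _))
  have hstar : IsStarIn G U t (v, L) :=
    { center_mem := (mem_sdiff.1 hv).1
      leaves_subset := hL.trans ((filter_subset _ _).trans sdiff_subset)
      card_leaves := hcard
      adj := fun u hu ↦ (mem_filter.1 (hL hu)).2 }
  exact not_disjoint_coveredVerts_of_maximal h𝒮 hstar (disjoint_sdiff_self_left.mono_left hsub)

theorem card_neighbors_lt_covered_add_of_maximal (h𝒮 : Maximal (IsStarTiling G U t) 𝒮)
    (hv : v ∈ U \ coveredVerts 𝒮) :
    #{u ∈ U | G.Adj v u} < #{u ∈ coveredVerts 𝒮 | G.Adj v u} + t := by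
  calc #{u ∈ U | G.Adj v u}
      = #{u ∈ coveredVerts 𝒮 ∪ U \ coveredVerts 𝒮 | G.Adj v u} := by
        rw [union_sdiff_of_subset h𝒮.prop.coveredVerts_subset]
    _ ≤ #{u ∈ coveredVerts 𝒮 | G.Adj v u} + #{u ∈ U \ coveredVerts 𝒮 | G.Adj v u} := by
        rw [filter_union]
        exact card_union_le _ _
    _ < #{u ∈ coveredVerts 𝒮 | G.Adj v u} + t := by
        gcongr
        exact card_uncovered_neighbors_lt_of_maximal h𝒮 hv

end IsStarTiling

variable [DecidableRel G.Adj] {A : Finset V} {δ Δ : ℕ}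

theorem IsStarTiling.card_mul_le_of_maximal (h𝒮 : Maximal (IsStarTiling G U t) 𝒮) (hA : A ⊆ U)
    (hδ : ∀ v ∈ A, δ ≤ #{u ∈ U | G.Adj v u}) (hΔ : ∀ v ∈ U, #{u ∈ U | G.Adj v u} ≤ Δ) :
    #A * (δ + 1 - t) ≤ #𝒮 * (t + 1) * (Δ + (δ + 1 - t)) := by
  rw [← h𝒮.prop.card_coveredVerts]
  refine card_mul_le_card_mul_add_of_sdiff G.Adj (fun v hv ↦ ?_) (fun c hc ↦ ?_)
  · have hlt := card_neighbors_lt_covered_add_of_maximal h𝒮 (sdiff_subset_sdiff hA le_rfl hv)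
    have hle := hδ v (mem_sdiff.1 hv).1
    omega
  · calc #{a ∈ A | G.Adj a c} ≤ #{u ∈ U | G.Adj c u} := by
          simp only [G.adj_comm c]
          exact card_le_card (filter_subset_filter _ hA)
      _ ≤ Δ := hΔ c (h𝒮.prop.coveredVerts_subset hc)

theorem IsStarTiling.card_mul_le_two_mul_of_maximal (h𝒮 : Maximal (IsStarTiling G U t) 𝒮)
    (ht : 1 ≤ t) (hA : A ⊆ U) (hδ : ∀ v ∈ A, δ ≤ #{u ∈ U | G.Adj v u})
    (hΔ : ∀ v ∈ U, #{u ∈ U | G.Adj v u} ≤ Δ) :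
    #A * (δ + 1 - t) ≤ #𝒮 * (2 * (t + 1) * Δ) := by
  obtain rfl | ⟨v, hv⟩ := A.eq_empty_or_nonempty
  · simp
  have hδΔ : δ + 1 - t ≤ Δ := by
    have := (hδ v hv).trans (hΔ v (hA hv))
    omega
  calc #A * (δ + 1 - t) ≤ #𝒮 * (t + 1) * (Δ + (δ + 1 - t)) :=
        card_mul_le_of_maximal h𝒮 hA hδ hΔ
    _ ≤ #𝒮 * (t + 1) * (Δ + Δ) := by gcongr
    _ = #𝒮 * (2 * (t + 1) * Δ) := by ring

theorem star_tiling_bound_general {ε : ℝ} (hε : ε ≤ 1 / 2) (ht : 1 ≤ t) (hA : A ⊆ U)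
    (hcard : (1 - 2 * ε) * (#U : ℝ) ≤ #A) (hδ : ∀ v ∈ A, δ ≤ #{u ∈ U | G.Adj v u})
    (hΔ : ∀ v ∈ U, #{u ∈ U | G.Adj v u} ≤ Δ) (h𝒮 : Maximal (IsStarTiling G U t) 𝒮) :
    ((δ : ℝ) - t + 1) * (1 - 2 * ε) * #U ≤ #𝒮 * (2 * ((t : ℝ) + 1) * Δ) := by
  have hsub : (δ : ℝ) - t + 1 ≤ (δ + 1 - t : ℕ) := by
    have : δ + 1 ≤ δ + 1 - t + t := le_tsub_add
    have : (δ : ℝ) + 1 ≤ (δ + 1 - t : ℕ) + t := mod_cast this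
    linarith
  have hε' : 0 ≤ 1 - 2 * ε := by linarith
  calc ((δ : ℝ) - t + 1) * (1 - 2 * ε) * #U
      = ((δ : ℝ) - t + 1) * ((1 - 2 * ε) * #U) := mul_assoc _ _ _
    _ ≤ (δ + 1 - t : ℕ) * (#A : ℝ) := by gcongr
    _ = (#A * (δ + 1 - t) : ℕ) := by push_cast; ring
    _ ≤ (#𝒮 * (2 * (t + 1) * Δ) : ℕ) := by
        exact_mod_cast IsStarTiling.card_mul_le_two_mul_of_maximal h𝒮 ht hA hδ hΔ
    _ = #𝒮 * (2 * ((t : ℝ) + 1) * Δ) := by push_cast; rfl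

end StarTilings

/-- **Proposition (star matching).** Let `U_H ⊆ U₁` be nonempty with
`|U_H| ≥ (1-2ε₁)|U₁|`, let `δ₀ = min_{v ∈ U_H} |N(v) ∩ U₁|` and let `Δ₀` be the maximum
degree of `G[U₁]`.  Then `ν_i(G[U₁]) · 2(i+1) · Δ₀ ≥ (δ₀ - i + 1)(1 - 2ε₁)|U₁|`, i.e.
there is a collection `𝒮` of pairwise vertex-disjoint `i`-stars in `G[U₁]` with
`|𝒮| · 2(i+1)Δ₀ ≥ (δ₀ - i + 1)(1 - 2ε₁)|U₁|`. -/
theorem star_tiling_bound {V : Type*} [Fintype V] [DecidableEq V]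
    (G : SimpleGraph V) [DecidableRel G.Adj]
    (U₁ UH : Finset V) (hsub : UH ⊆ U₁) (hne : UH.Nonempty)
    (ε₁ : ℝ) (hε₁0 : 0 ≤ ε₁) (hε₁ : ε₁ < 1 / 2)
    (hUH : (1 - 2 * ε₁) * (U₁.card : ℝ) ≤ (UH.card : ℝ))
    (i : ℕ) (hi : 1 ≤ i)
    (δ₀ Δ₀ : ℕ)
    (hδlb : ∀ v ∈ UH, δ₀ ≤ (U₁.filter fun u => G.Adj v u).card)
    (hδmem : ∃ v ∈ UH, (U₁.filter fun u => G.Adj v u).card = δ₀)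
    (hΔub : ∀ v ∈ U₁, (U₁.filter fun u => G.Adj v u).card ≤ Δ₀)
    (hΔmem : ∃ v ∈ U₁, (U₁.filter fun u => G.Adj v u).card = Δ₀) :
    ∃ 𝒮 : Finset (V × Finset V),
      (∀ p ∈ 𝒮, p.1 ∈ U₁ ∧ p.2 ⊆ U₁ ∧ p.2.card = i ∧ p.1 ∉ p.2 ∧
        ∀ v ∈ p.2, G.Adj p.1 v) ∧
      ((𝒮 : Set (V × Finset V)).Pairwise fun p q =>
        Disjoint (insert p.1 p.2) (insert q.1 q.2)) ∧
      ((δ₀ : ℝ) - (i : ℝ) + 1) * (1 - 2 * ε₁) * (U₁.card : ℝ) ≤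
        (𝒮.card : ℝ) * (2 * ((i : ℝ) + 1) * (Δ₀ : ℝ)) := by
  obtain ⟨𝒮, h𝒮⟩ := IsStarTiling.exists_maximal G U₁ i
  exact ⟨𝒮, fun p hp ↦
    have h := h𝒮.prop.isStarIn p hp
    ⟨h.center_mem, h.leaves_subset, h.card_leaves, h.center_notMem_leaves, h.adj⟩,
    h𝒮.prop.pairwiseDisjoint, star_tiling_bound_general hε₁.le hi hsub hUH hδlb hΔub h𝒮⟩
end

section
/- Let G be a graph on n vertices, let k ≥ 2 be an integer, and let s be a natural number. If d(x) + d(y) ≥ 2(1 − 1/k)·n − 2s for all nonadjacent vertices x, y ∈ V(G), then G has a K_k-tiling covering all but at most k(k−1)s + (k−1)² vertices. -/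
/-!
Among all families of disjoint cliques of size at most `k`, choose one that is lexicographically
optimal: as many `k`-cliques as possible, then as many `(k - 1)`-cliques as possible, and so on.
Suppose more than `k * s + k - 1` of its members are smaller than `k`, and let `M` be the least
size such that more than `M` members have size at most `M`. Let `U` be the union of the members of
size at most `M`, and count the nonadjacent pairs leaving `U` in two ways.

* From below: optimality forces every member `D` to have at least `#U * #D / k` nonadjacent pairs
  with `U`, and at least `#U / k` more when `M ≤ #D < k`.
* From above: the vertices of `U` whose degree is too small form a clique `K`. There are two members
  of size exactly `M`, and exchanging part of either of them for part of `K` cannot produce a larger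
  clique; this is Hall's condition for matching `K` into `U` along nonedges. Averaging the Ore
  condition over the matched pairs, the Ore bound holds on average over `U`.

Together these leave at most `k * s` members with `M ≤ #D < k`, while the minimality of `M` leaves
at most `M - 1` smaller ones.
-/

open Finset

section Averaging

variable {α R : Type*} [AddCommGroup R] [LinearOrder R] [IsOrderedAddMonoid R]
  {h : α → R} {U : Finset α}

theorem sum_nonpos_of_pairing (f : {u ∈ U | 0 < h u} → α)
    (hf : f.Injective) (hfU : ∀ u, f u ∈ U)
    (hpair : ∀ u : {u ∈ U | 0 < h u}, h u + h (f u) ≤ 0) :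
    ∑ u ∈ U, h u ≤ 0 := by
  classical
  have hsub : univ.map ⟨f, hf⟩ ⊆ {u ∈ U | ¬ 0 < h u} := by
    intro v hv
    obtain ⟨u, -, rfl⟩ := mem_map.1 hv
    have hu : 0 < h u := (mem_filter.1 u.2).2
    refine mem_filter.2 ⟨hfU u, fun hfu => (add_pos hu hfu).not_ge (hpair u)⟩
  calc ∑ u ∈ U, h u = ∑ u ∈ U with 0 < h u, h u + ∑ u ∈ U with ¬ 0 < h u, h u :=
        (sum_filter_add_sum_filter_not U _ h).symm
    _ ≤ ∑ u ∈ U with 0 < h u, h u + ∑ u ∈ univ.map ⟨f, hf⟩, h u := by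
        gcongr 1
        rw [← sum_sdiff hsub]
        refine add_le_of_nonpos_left (sum_nonpos fun u hu => ?_)
        exact not_lt.1 (mem_filter.1 (mem_sdiff.1 hu).1).2
    _ = ∑ u : {u ∈ U | 0 < h u}, (h u + h (f u)) := by
        rw [sum_map, ← sum_coe_sort {u ∈ U | 0 < h u}, ← sum_add_distrib,
          Function.Embedding.coeFn_mk]
    _ ≤ 0 := sum_nonpos fun u _ => hpair u

theorem sum_nonpos_of_hall (r : α → α → Prop) [DecidableRel r]
    (hr : ∀ u v, r u v → h u + h v ≤ 0)
    (hall : ∀ S ⊆ {u ∈ U | 0 < h u}, #S ≤ #{v ∈ U | ∃ u ∈ S, r u v}) :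
    ∑ u ∈ U, h u ≤ 0 := by
  classical
  obtain ⟨f, hf, hfr⟩ := (all_card_le_biUnion_card_iff_exists_injective
    fun u : {u ∈ U | 0 < h u} => {v ∈ U | r u v}).1 fun S => by
      refine (card_map (Function.Embedding.subtype _)).symm.trans_le
        ((hall (S.map (.subtype _)) (map_subtype_subset S)).trans (card_le_card fun v hv => ?_))
      simp only [mem_filter, mem_map, mem_biUnion] at hv ⊢
      obtain ⟨hvU, _, ⟨u, huS, rfl⟩, huv⟩ := hv
      exact ⟨u, huS, hvU, huv⟩
  exact sum_nonpos_of_pairing f hf (fun u => (mem_filter.1 (hfr u)).1)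
    fun u => hr _ _ (mem_filter.1 (hfr u)).2

end Averaging

theorem isClique_union_iff {V : Type*} {G : SimpleGraph V} {s t : Set V} :
    G.IsClique (s ∪ t) ↔ G.IsClique s ∧ G.IsClique t ∧ ∀ u ∈ s, ∀ v ∈ t, u ≠ v → G.Adj u v :=
  have := G.symm
  Set.pairwise_union_of_symm

/-- Families of pairwise disjoint nonempty cliques with at most `k` vertices each. Allowing small
cliques lets one compare tilings by how far their leftover vertices are from forming a `K_k`. -/
structure IsCliquePacking {V : Type*} (G : SimpleGraph V) (k : ℕ) (P : Finset (Finset V)) :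
    Prop where
  nonempty : ∀ A ∈ P, A.Nonempty
  card_le : ∀ A ∈ P, #A ≤ k
  isClique : ∀ A ∈ P, G.IsClique (A : Set V)
  pairwiseDisjoint : (P : Set (Finset V)).PairwiseDisjoint id

namespace IsCliquePacking

variable {V : Type*} {G : SimpleGraph V} {k : ℕ} {P Q : Finset (Finset V)}

theorem empty : IsCliquePacking G k ∅ := by constructor <;> simp

theorem singleton {A : Finset V} (hne : A.Nonempty) (hk : #A ≤ k) (hA : G.IsClique (A : Set V)) :
    IsCliquePacking G k {A} := by
  constructor <;> simp [*]

theorem subset (h : IsCliquePacking G k P) (hQ : Q ⊆ P) : IsCliquePacking G k Q where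
  nonempty A hA := h.nonempty A (hQ hA)
  card_le A hA := h.card_le A (hQ hA)
  isClique A hA := h.isClique A (hQ hA)
  pairwiseDisjoint := h.pairwiseDisjoint.subset (coe_subset.2 hQ)

theorem union [DecidableEq V] (hP : IsCliquePacking G k P) (hQ : IsCliquePacking G k Q)
    (hPQ : ∀ A ∈ P, ∀ B ∈ Q, Disjoint A B) : IsCliquePacking G k (P ∪ Q) where
  nonempty A hA := (mem_union.1 hA).elim (hP.nonempty A) (hQ.nonempty A)
  card_le A hA := (mem_union.1 hA).elim (hP.card_le A) (hQ.card_le A)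
  isClique A hA := (mem_union.1 hA).elim (hP.isClique A) (hQ.isClique A)
  pairwiseDisjoint := by
    rw [coe_union]
    exact Set.pairwiseDisjoint_union.2
      ⟨hP.pairwiseDisjoint, hQ.pairwiseDisjoint, fun A hA B hB _ => hPQ A hA B hB⟩

theorem eq_of_mem (h : IsCliquePacking G k P) {A B : Finset V} {v : V} (hA : A ∈ P) (hB : B ∈ P)
    (hvA : v ∈ A) (hvB : v ∈ B) : A = B :=
  h.pairwiseDisjoint.elim_finset hA hB v hvA hvB

theorem disjoint (h : IsCliquePacking G k P) {A B : Finset V} (hA : A ∈ P) (hB : B ∈ P)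
    (hAB : A ≠ B) : Disjoint A B :=
  h.pairwiseDisjoint hA hB hAB

theorem card_le_card_univ [Fintype V] (h : IsCliquePacking G k P) : #P ≤ Fintype.card V := by
  classical
  exact (card_le_card_biUnion h.pairwiseDisjoint h.nonempty).trans (card_le_univ _)

end IsCliquePacking

section Weight

variable {V : Type*} [Fintype V] {G : SimpleGraph V} {k : ℕ} {P Q : Finset (Finset V)}

/-- The potential whose maximizers are the lexicographically optimal packings: a packing has at most
`Fintype.card V` members, so one clique outweighs any packing by smaller ones. -/
def packingWeight (P : Finset (Finset V)) : ℕ := ∑ A ∈ P, (Fintype.card V + 1) ^ #A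

theorem packingWeight_union [DecidableEq V] (h : Disjoint P Q) :
    packingWeight (P ∪ Q) = packingWeight P + packingWeight Q :=
  sum_union h

theorem packingWeight_mono (h : P ⊆ Q) : packingWeight P ≤ packingWeight Q :=
  sum_le_sum_of_subset h

theorem IsCliquePacking.packingWeight_lt (h : IsCliquePacking G k P) {M : ℕ}
    (hM : ∀ A ∈ P, #A ≤ M) : packingWeight P < (Fintype.card V + 1) ^ (M + 1) :=
  calc packingWeight P ≤ #P * (Fintype.card V + 1) ^ M :=
        sum_le_card_nsmul P _ _ fun A hA => Nat.pow_le_pow_right (by lia) (hM A hA)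
    _ ≤ Fintype.card V * (Fintype.card V + 1) ^ M := by gcongr; exact h.card_le_card_univ
    _ < (Fintype.card V + 1) ^ (M + 1) := by rw [pow_succ']; gcongr; lia

/-- Clique packings of maximum weight, that is, with as many `k`-cliques as possible, then as many
`(k - 1)`-cliques as possible, and so on. -/
structure IsOptimalPacking (G : SimpleGraph V) (k : ℕ) (P : Finset (Finset V)) : Prop
    extends IsCliquePacking G k P where
  packingWeight_le : ∀ Q, IsCliquePacking G k Q → packingWeight Q ≤ packingWeight P

theorem exists_isOptimalPacking (G : SimpleGraph V) (k : ℕ) : ∃ P, IsOptimalPacking G k P := by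
  classical
  obtain ⟨P, hP, hmax⟩ := exists_max_image {P | IsCliquePacking G k P} packingWeight
    ⟨∅, mem_filter.2 ⟨mem_univ _, .empty⟩⟩
  simp only [mem_filter, mem_univ, true_and] at hP hmax
  exact ⟨P, hP, hmax⟩

end Weight

/-- The number of pairs `(u, v) ∈ S × T` with `u` and `v` nonadjacent. Pairs `(v, v)` count, so a
clique `A` has `nonadjCount G A A = #A`. -/
def nonadjCount {V : Type*} (G : SimpleGraph V) [DecidableRel G.Adj] (S T : Finset V) : ℕ :=
  ∑ u ∈ S, #{v ∈ T | ¬ G.Adj u v}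

section NonadjCount

variable {V : Type*} {G : SimpleGraph V} [DecidableRel G.Adj] {S T : Finset V}

theorem nonadjCount_comm : nonadjCount G S T = nonadjCount G T S := by
  simpa only [nonadjCount, bipartiteAbove, bipartiteBelow, G.adj_comm] using
    sum_card_bipartiteAbove_eq_sum_card_bipartiteBelow (s := S) (t := T) (fun u v => ¬ G.Adj u v)

theorem card_le_nonadjCount (h : ∀ u ∈ S, ∃ v ∈ T, ¬ G.Adj u v) : #S ≤ nonadjCount G S T := by
  rw [card_eq_sum_ones]
  refine sum_le_sum fun u hu => card_pos.2 ?_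
  simpa only [filter_nonempty_iff] using h u hu

theorem exists_complete_subset {t : ℕ} (ht : t ≤ #S - nonadjCount G S T) :
    ∃ X ⊆ S, #X = t ∧ ∀ u ∈ X, ∀ v ∈ T, G.Adj u v := by
  have hsplit := card_filter_add_card_filter_not (s := S) (fun u => ∀ v ∈ T, G.Adj u v)
  have hpoor : #{u ∈ S | ¬ ∀ v ∈ T, G.Adj u v} ≤ nonadjCount G S T :=
    (card_le_nonadjCount fun u hu => by simpa using (mem_filter.1 hu).2).trans
      (sum_le_sum_of_subset (filter_subset _ S))
  obtain ⟨X, hX, hXt⟩ :=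
    exists_subset_card_eq (show t ≤ #{u ∈ S | ∀ v ∈ T, G.Adj u v} by lia)
  exact ⟨X, hX.trans (filter_subset _ S), hXt, fun u hu => (mem_filter.1 (hX hu)).2⟩

theorem nonadjCount_biUnion_left [DecidableEq V] {I : Finset (Finset V)}
    (hI : (I : Set (Finset V)).PairwiseDisjoint id) (T : Finset V) :
    nonadjCount G (I.biUnion id) T = ∑ A ∈ I, nonadjCount G A T :=
  sum_biUnion hI

theorem nonadjCount_biUnion_right [DecidableEq V] {I : Finset (Finset V)}
    (hI : (I : Set (Finset V)).PairwiseDisjoint id) (S : Finset V) :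
    nonadjCount G S (I.biUnion id) = ∑ A ∈ I, nonadjCount G S A := by
  simp only [nonadjCount_comm (S := S), nonadjCount_biUnion_left hI]

theorem nonadjCount_univ_add_sum_degree [Fintype V] (S : Finset V) :
    nonadjCount G S univ + ∑ u ∈ S, G.degree u = #S * Fintype.card V := by
  rw [nonadjCount, ← sum_add_distrib, ← smul_eq_mul, ← sum_const]
  refine sum_congr rfl fun u _ => ?_
  rw [← G.card_neighborFinset_eq_degree, G.neighborFinset_eq_filter, add_comm,
    card_filter_add_card_filter_not, card_univ]

end NonadjCount

section SmallMembers

variable {V : Type*} {P : Finset (Finset V)} {M : ℕ}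

/-- The members of the family `P` with at most `m` elements. -/
def smallMembers (P : Finset (Finset V)) (m : ℕ) : Finset (Finset V) := {A ∈ P | #A ≤ m}

theorem mem_smallMembers {m : ℕ} {A : Finset V} : A ∈ smallMembers P m ↔ A ∈ P ∧ #A ≤ m :=
  mem_filter

theorem smallMembers_subset (P : Finset (Finset V)) (m : ℕ) : smallMembers P m ⊆ P :=
  filter_subset _ P

/-- `M` is the least size such that `P` has more than `M` members with at most `M` elements. The
double count is carried out on the union of these members. -/
structure IsCriticalSize (P : Finset (Finset V)) (M : ℕ) : Prop where
  lt_card : M < #(smallMembers P M)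
  card_le : ∀ m < M, #(smallMembers P m) ≤ m

theorem exists_isCriticalSize {m : ℕ} (hm : m < #(smallMembers P m)) :
    ∃ M ≤ m, IsCriticalSize P M := by
  have hex : ∃ M, M < #(smallMembers P M) := ⟨m, hm⟩
  exact ⟨Nat.find hex, Nat.find_min' hex hm, Nat.find_spec hex,
    fun j hj => not_lt.1 (Nat.find_min hex hj)⟩

namespace IsCriticalSize

theorem pos (hM : IsCriticalSize P M) (hP : ∀ A ∈ P, A.Nonempty) : 0 < M := by
  obtain ⟨A, hA⟩ := card_pos.1 (Nat.zero_lt_of_lt hM.lt_card)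
  obtain ⟨hAP, hAM⟩ := mem_smallMembers.1 hA
  exact (hP A hAP).card_pos.trans_le hAM

theorem card_smallMembers_le (hM : IsCriticalSize P M) {m : ℕ} (hm : m < M) (l : ℕ) :
    #(smallMembers P l) ≤ m + #{A ∈ smallMembers P l | m < #A} := by
  have hle : #{A ∈ smallMembers P l | ¬ m < #A} ≤ m := by
    refine (card_le_card fun A hA => ?_).trans (hM.card_le m hm)
    obtain ⟨hA, hAm⟩ := mem_filter.1 hA
    exact mem_smallMembers.2 ⟨smallMembers_subset P l hA, not_lt.1 hAm⟩
  have := card_filter_add_card_filter_not (s := smallMembers P l) (fun A => m < #A)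
  lia

theorem exists_pair (hM : IsCriticalSize P M) (hpos : 0 < M) :
    ∃ A ∈ P, ∃ B ∈ P, A ≠ B ∧ #A = M ∧ #B = M := by
  have hcard := hM.card_smallMembers_le (Nat.sub_lt hpos one_pos) M
  have hlt := hM.lt_card
  obtain ⟨A, hA, B, hB, hAB⟩ := one_lt_card.1
    (show 1 < #{A ∈ smallMembers P M | M - 1 < #A} by lia)
  simp only [mem_filter, mem_smallMembers] at hA hB
  exact ⟨A, hA.1.1, B, hB.1.1, hAB, by lia, by lia⟩

end IsCriticalSize

end SmallMembers

namespace IsOptimalPacking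

variable {V : Type*} [Fintype V] {G : SimpleGraph V} {k M : ℕ} {P : Finset (Finset V)}

theorem packingWeight_le_of_replace [DecidableEq V] (h : IsOptimalPacking G k P)
    {N : Finset (Finset V)} (hN : IsCliquePacking G k N) :
    packingWeight N ≤ packingWeight {A ∈ P | ¬ Disjoint A (N.biUnion id)} := by
  set P₀ := {A ∈ P | Disjoint A (N.biUnion id)}
  have hdisj : ∀ B ∈ N, ∀ A ∈ P₀, Disjoint B A := fun B hB A hA =>
    ((disjoint_biUnion_right _ _ _).1 (mem_filter.1 hA).2 B hB).symm
  have hnew := h.packingWeight_le _ (hN.union (h.subset (filter_subset _ P)) hdisj)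
  rw [packingWeight_union] at hnew
  · have hsplit : packingWeight P₀ + packingWeight {A ∈ P | ¬ Disjoint A (N.biUnion id)} =
      packingWeight P := sum_filter_add_sum_filter_not P _ _
    lia
  · refine disjoint_left.2 fun B hBN hBP => (hN.nonempty B hBN).ne_empty ?_
    exact disjoint_self.1 (hdisj B hBN B hBP)

/-- The basic exchange: remove `D` and everything else that is hit, insert `N` and part of `Q`. -/
theorem card_le_of_exchange [DecidableEq V] (h : IsOptimalPacking G k P)
    {N D : Finset (Finset V)} {Q : Finset V} (hM : M < k) (hN : IsCliquePacking G k N)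
    (hQ : G.IsClique (Q : Set V)) (hNQ : ∀ B ∈ N, Disjoint B Q)
    (hD : packingWeight D ≤ packingWeight N)
    (hhit : ∀ A ∈ P, A ∉ D → ¬ Disjoint A (N.biUnion id ∪ Q) → #A ≤ M) : #Q ≤ M := by
  by_contra! hlt
  obtain ⟨Q', hQ', hcard⟩ := exists_subset_card_eq (Nat.succ_le_of_lt hlt)
  have hdisj : ∀ A ∈ ({Q'} : Finset (Finset V)), ∀ B ∈ N, Disjoint A B := fun A hA B hB =>
    (disjoint_of_subset_right (mem_singleton.1 hA ▸ hQ') (hNQ B hB)).symm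
  have hne : Q'.Nonempty := card_pos.1 (by lia)
  have hQN : Disjoint {Q'} N := disjoint_singleton_left.2 fun hQ'N =>
    hne.ne_empty (disjoint_self.1 (hdisj Q' (mem_singleton_self Q') Q' hQ'N))
  have hnew := h.packingWeight_le_of_replace <|
    (IsCliquePacking.singleton hne (by lia) (hQ.subset (coe_subset.2 hQ'))).union hN hdisj
  set H := {A ∈ P | ¬ Disjoint A (({Q'} ∪ N).biUnion id)} with hH
  have hsmall : packingWeight {A ∈ H | A ∉ D} < (Fintype.card V + 1) ^ (M + 1) := by
    have hHP : {A ∈ H | A ∉ D} ⊆ P := (filter_subset _ H).trans (filter_subset _ P)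
    refine (h.subset hHP).packingWeight_lt fun A hA => ?_
    obtain ⟨⟨hAP, hAhit⟩, hAD⟩ : (A ∈ P ∧ ¬ Disjoint A (({Q'} ∪ N).biUnion id)) ∧ A ∉ D := by
      simpa only [hH, mem_filter] using hA
    refine hhit A hAP hAD (mt (disjoint_of_subset_right ?_) hAhit)
    rw [union_biUnion, singleton_biUnion, union_comm]
    exact union_subset_union_right hQ'
  have hold : packingWeight {A ∈ H | A ∈ D} ≤ packingWeight D :=
    packingWeight_mono fun A hA => (mem_filter.1 hA).2
  have hsplit : packingWeight {A ∈ H | A ∈ D} + packingWeight {A ∈ H | A ∉ D} = packingWeight H :=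
    sum_filter_add_sum_filter_not H _ _
  have hweight : packingWeight {Q'} = (Fintype.card V + 1) ^ (M + 1) := by
    rw [packingWeight, sum_singleton, hcard]
  rw [packingWeight_union hQN] at hnew
  lia

theorem card_le_of_isClique (h : IsOptimalPacking G k P) {Q : Finset V} (hM : M < k)
    (hQ : G.IsClique (Q : Set V)) (hhit : ∀ A ∈ P, ¬ Disjoint A Q → #A ≤ M) : #Q ≤ M := by
  classical
  exact h.card_le_of_exchange hM .empty hQ (by simp) le_rfl fun A hA _ hAQ =>
    hhit A hA (by simpa using hAQ)

theorem biUnion_eq_univ [DecidableEq V] (h : IsOptimalPacking G k P) (hk : 0 < k) :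
    P.biUnion id = univ := by
  by_contra! hne
  obtain ⟨v, hv⟩ := not_forall.1 (mt eq_univ_iff_forall.2 hne)
  have : #{v} ≤ 0 := h.card_le_of_isClique hk (by simp) fun A hA hAv =>
    absurd (mem_biUnion.2 ⟨A, hA, by simpa using hAv⟩) hv
  simp at this

theorem sum_card (h : IsOptimalPacking G k P) (hk : 0 < k) : ∑ A ∈ P, #A = Fintype.card V := by
  classical
  rw [← card_univ, ← h.biUnion_eq_univ hk, card_biUnion h.pairwiseDisjoint]
  rfl

/-- Exchange through a `k`-clique `C`: `X` moves from `A` to `C`, and `Y` from `C` to `B`. -/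
theorem card_add_card_le_max (h : IsOptimalPacking G k P) {A B C X Y : Finset V} (hA : A ∈ P)
    (hB : B ∈ P) (hC : C ∈ P) (hAB : A ≠ B) (hAk : #A < k) (hBk : #B < k) (hCk : #C = k)
    (hX : X ⊆ A) (hY : Y ⊆ C) (hXY : #X = #Y) (hXC : ∀ u ∈ X, ∀ v ∈ C, G.Adj u v)
    (hYB : ∀ u ∈ Y, ∀ v ∈ B, G.Adj u v) : #B + #Y ≤ max #A #B := by
  classical
  have hdAC : Disjoint A C := h.disjoint hA hC (by rintro rfl; lia)
  have hdBC : Disjoint B C := h.disjoint hB hC (by rintro rfl; lia)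
  have hC' : G.IsClique (↑(C \ Y ∪ X) : Set V) := by
    rw [coe_union, isClique_union_iff]
    exact ⟨(h.isClique C hC).subset (by simp), (h.isClique A hA).subset (coe_subset.2 hX),
      fun u hu v hv _ => (hXC v hv u (sdiff_subset hu)).symm⟩
  have hQ : G.IsClique (↑(B ∪ Y) : Set V) := by
    rw [coe_union, isClique_union_iff]
    exact ⟨h.isClique B hB, (h.isClique C hC).subset (coe_subset.2 hY),
      fun u hu v hv _ => (hYB v hv u hu).symm⟩
  have hcard : #(C \ Y ∪ X) = k := by
    rw [card_union_of_disjoint (disjoint_of_subset_left sdiff_subset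
      (disjoint_of_subset_left hX hdAC).symm), hXY, card_sdiff_add_card_eq_card hY, hCk]
  have hdisj : Disjoint (C \ Y ∪ X) (B ∪ Y) := by
    rw [disjoint_union_left, disjoint_union_right, disjoint_union_right]
    exact ⟨⟨disjoint_of_subset_left sdiff_subset hdBC.symm, sdiff_disjoint⟩,
      disjoint_of_subset_left hX (h.disjoint hA hB hAB),
      disjoint_of_subset_left hX (disjoint_of_subset_right hY hdAC)⟩
  rw [← card_union_of_disjoint (disjoint_of_subset_right hY hdBC)]
  refine h.card_le_of_exchange (N := {C \ Y ∪ X}) (D := {C}) (max_lt hAk hBk)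
    (.singleton (card_pos.1 (by lia)) hcard.le hC') hQ (fun N hN => mem_singleton.1 hN ▸ hdisj)
    (by simp only [packingWeight, sum_singleton, hcard, hCk, le_refl]) ?_
  intro E hE hEC hhit
  obtain ⟨v, hvE, hv⟩ := not_disjoint_iff.1 hhit
  have hv' : v ∈ C ∨ v ∈ A ∨ v ∈ B := by
    simp only [singleton_biUnion, id, mem_union, mem_sdiff] at hv
    grind
  rcases hv' with hvC | hvA | hvB
  · exact absurd (mem_singleton.2 (h.eq_of_mem hE hC hvE hvC)) hEC
  · exact h.eq_of_mem hE hA hvE hvA ▸ le_max_left _ _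
  · exact h.eq_of_mem hE hB hvE hvB ▸ le_max_right _ _

section LowerBound

variable [DecidableRel G.Adj] {A B C D : Finset V}

theorem card_le_nonadjCount_of_card_le (h : IsOptimalPacking G k P) (hA : A ∈ P) (hB : B ∈ P)
    (hAB : #A ≤ #B) (hBk : #B < k) : #A ≤ nonadjCount G A B := by
  classical
  refine card_le_nonadjCount fun u hu => ?_
  by_contra! hadj
  have huB : u ∉ B := fun huB => G.irrefl (hadj u huB)
  have hle : #(insert u B) ≤ #B := h.card_le_of_isClique hBk
    (by rw [coe_insert]; exact (h.isClique B hB).insert fun v hv _ => hadj v hv) ?_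
  · rw [card_insert_of_notMem huB] at hle
    lia
  · intro E hE hhit
    obtain ⟨v, hvE, hv⟩ := not_disjoint_iff.1 hhit
    rcases mem_insert.1 hv with rfl | hvB
    · rwa [h.eq_of_mem hE hA hvE hu]
    · rw [h.eq_of_mem hE hB hvE hvB]

theorem card_mul_card_add_le (h : IsOptimalPacking G k P) (hA : A ∈ P) (hD : D ∈ P)
    (hAk : #A < k) (hDk : #D < k) :
    #A * #D + (if #A ≤ #D then #A else 0) ≤ k * nonadjCount G A D := by
  split_ifs with hAD
  · have := h.card_le_nonadjCount_of_card_le hA hD hAD hDk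
    nlinarith
  · have := h.card_le_nonadjCount_of_card_le hD hA (not_le.1 hAD).le hAk
    rw [nonadjCount_comm] at this
    nlinarith

/-- The two terms of the minimum bound from below the number of vertices of `A` complete to `C`, and
of `C` complete to `B`. -/
theorem card_add_min_le_max (h : IsOptimalPacking G k P) (hA : A ∈ P) (hB : B ∈ P) (hC : C ∈ P)
    (hAB : A ≠ B) (hAk : #A < k) (hBk : #B < k) (hCk : #C = k) :
    #B + min (#A - nonadjCount G A C) (k - nonadjCount G B C) ≤ max #A #B := by
  obtain ⟨X, hX, hXcard, hXC⟩ := exists_complete_subset (G := G) (S := A) (T := C)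
    (min_le_left _ (k - nonadjCount G B C))
  obtain ⟨Y, hY, hYcard, hYB⟩ := exists_complete_subset (G := G) (S := C) (T := B)
    (t := min (#A - nonadjCount G A C) (k - nonadjCount G B C))
    (by rw [hCk, nonadjCount_comm (S := C)]; exact min_le_right _ _)
  rw [← hYcard]
  exact h.card_add_card_le_max hA hB hC hAB hAk hBk hCk hX hY (hXcard.trans hYcard.symm) hXC hYB

theorem card_add_ite_le_nonadjCount (h : IsOptimalPacking G k P) (hA : A ∈ P) (hB : B ∈ P)
    (hC : C ∈ P) (hAB : A ≠ B) (hAk : #A < k) (hBk : #B < k) (hCk : #C = k)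
    (hAC : nonadjCount G A C < #A) :
    #B + (if nonadjCount G A C < #B then 1 else 0) ≤ nonadjCount G B C := by
  have hAtoB := h.card_add_min_le_max hA hB hC hAB hAk hBk hCk
  have hBtoA := h.card_add_min_le_max hB hA hC hAB.symm hBk hAk hCk
  split_ifs <;> lia

theorem sum_card_le_sum_nonadjCount (h : IsOptimalPacking G k P) (hM : IsCriticalSize P M)
    (hMk : M < k) (hC : C ∈ P) (hCk : #C = k) :
    ∑ A ∈ smallMembers P M, #A ≤ ∑ A ∈ smallMembers P M, nonadjCount G A C := by
  classical
  by_cases! hall : ∀ A ∈ smallMembers P M, #A ≤ nonadjCount G A C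
  · exact sum_le_sum hall
  obtain ⟨A, hA, hAC⟩ := hall
  obtain ⟨hAP, hAM⟩ := mem_smallMembers.1 hA
  have hothers : ∑ B ∈ (smallMembers P M).erase A,
      (#B + if nonadjCount G A C < #B then 1 else 0) ≤
        ∑ B ∈ (smallMembers P M).erase A, nonadjCount G B C := by
    refine sum_le_sum fun B hB => ?_
    obtain ⟨hBA, hB⟩ := mem_erase.1 hB
    obtain ⟨hBP, hBM⟩ := mem_smallMembers.1 hB
    exact h.card_add_ite_le_nonadjCount hAP hBP hC hBA.symm (hAM.trans_lt hMk)
      (hBM.trans_lt hMk) hCk hAC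
  have htotal : ∑ B ∈ smallMembers P M, (#B + if nonadjCount G A C < #B then 1 else 0) =
      ∑ B ∈ smallMembers P M, #B + #{B ∈ smallMembers P M | nonadjCount G A C < #B} := by
    rw [sum_add_distrib, ← card_filter]
  have hcount := hM.card_smallMembers_le (hAC.trans_le hAM) M
  have hlt := hM.lt_card
  rw [← add_sum_erase _ _ hA, if_pos hAC] at htotal
  rw [← add_sum_erase _ (fun B => nonadjCount G B C) hA]
  lia

theorem card_biUnion_mul_card_add_le [DecidableEq V] (h : IsOptimalPacking G k P)
    (hM : IsCriticalSize P M) (hMk : M < k) (hD : D ∈ P) :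
    #((smallMembers P M).biUnion id) * #D +
        (if M ≤ #D ∧ #D < k then #((smallMembers P M).biUnion id) else 0) ≤
      k * nonadjCount G ((smallMembers P M).biUnion id) D := by
  have hdisj := (h.subset (smallMembers_subset P M)).pairwiseDisjoint
  rw [nonadjCount_biUnion_left hdisj, card_biUnion hdisj]
  rcases (h.card_le D hD).lt_or_eq with hlt | heq
  · have hA : ∀ A ∈ smallMembers P M, #A * #D + (if M ≤ #D then #A else 0) ≤
        k * nonadjCount G A D := by
      intro A hA
      obtain ⟨hAP, hAM⟩ := mem_smallMembers.1 hA
      refine le_trans ?_ (h.card_mul_card_add_le hAP hD (hAM.trans_lt hMk) hlt)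
      split_ifs <;> lia
    simpa [sum_mul, mul_sum, sum_add_distrib, hlt, apply_ite] using sum_le_sum hA
  · rw [if_neg (by lia), add_zero, heq, mul_comm]
    exact Nat.mul_le_mul_left k (h.sum_card_le_sum_nonadjCount hM hMk hD heq)

theorem card_biUnion_mul_add_le [DecidableEq V] (h : IsOptimalPacking G k P)
    (hM : IsCriticalSize P M) (hMk : M < k) :
    #((smallMembers P M).biUnion id) * (Fintype.card V + #{D ∈ P | M ≤ #D ∧ #D < k}) ≤
      k * nonadjCount G ((smallMembers P M).biUnion id) univ := by
  have hk : 0 < k := Nat.zero_lt_of_lt hMk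
  have hsum := sum_le_sum fun D hD => h.card_biUnion_mul_card_add_le (D := D) hM hMk hD
  rw [sum_add_distrib, ← mul_sum, ← mul_sum, ← nonadjCount_biUnion_right h.pairwiseDisjoint,
    h.biUnion_eq_univ hk, h.sum_card hk, ← sum_filter, sum_const, smul_eq_mul] at hsum
  rwa [mul_add, mul_comm _ #{D ∈ P | M ≤ #D ∧ #D < k}]

end LowerBound

section UpperBound

variable [DecidableEq V]

theorem card_sdiff_le_card_inter (h : IsOptimalPacking G k P) (hMk : M < k) {D S T : Finset V}
    (hD : D ∈ P) (hDM : #D = M) (hS : G.IsClique (S : Set V))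
    (hSU : S ⊆ (smallMembers P M).biUnion id)
    (hT : ∀ u ∈ S, ∀ v ∈ D, v ∉ T → u ≠ v → G.Adj u v) : #(S \ D) ≤ #(D ∩ T) := by
  have hclique : G.IsClique (↑(D \ T ∪ S \ D) : Set V) := by
    rw [coe_union, isClique_union_iff]
    refine ⟨(h.isClique D hD).subset (by simp), hS.subset (by simp), fun v hv u hu huv => ?_⟩
    rw [mem_coe, mem_sdiff] at hu hv
    exact (hT u hu.1 v hv.1 hv.2 huv.symm).symm
  have hle : #(D \ T ∪ S \ D) ≤ M := by
    refine h.card_le_of_isClique hMk hclique fun A hA hhit => ?_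
    obtain ⟨v, hvA, hv⟩ := not_disjoint_iff.1 hhit
    rcases mem_union.1 hv with hvD | hvS
    · rw [h.eq_of_mem hA hD hvA (mem_sdiff.1 hvD).1, hDM]
    · obtain ⟨B, hB, hvB⟩ := mem_biUnion.1 (hSU (mem_sdiff.1 hvS).1)
      obtain ⟨hBP, hBM⟩ := mem_smallMembers.1 hB
      rwa [h.eq_of_mem hA hBP hvA hvB]
  rw [card_union_of_disjoint (disjoint_of_subset_left sdiff_subset disjoint_sdiff)] at hle
  have := card_sdiff_add_card_inter D T
  lia

theorem card_le_card_filter_compl_adj [DecidableRel G.Adj] (h : IsOptimalPacking G k P)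
    (hM : IsCriticalSize P M) (hMk : M < k) {S : Finset V} (hS : G.IsClique (S : Set V))
    (hSU : S ⊆ (smallMembers P M).biUnion id) :
    #S ≤ #{v ∈ (smallMembers P M).biUnion id | ∃ u ∈ S, Gᶜ.Adj u v} := by
  set T := {v ∈ (smallMembers P M).biUnion id | ∃ u ∈ S, Gᶜ.Adj u v}
  obtain ⟨A, hA, B, hB, hAB, hAM, hBM⟩ := hM.exists_pair (hM.pos h.nonempty)
  have hexchange : ∀ D ∈ P, #D = M → #(S \ D) ≤ #(D ∩ T) := by
    refine fun D hD hDM => h.card_sdiff_le_card_inter hMk hD hDM hS hSU fun u hu v hv hvT huv => ?_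
    by_contra hadj
    exact hvT (mem_filter.2 ⟨mem_biUnion.2 ⟨D, mem_smallMembers.2 ⟨hD, hDM.le⟩, hv⟩, u, hu,
      (G.compl_adj u v).2 ⟨huv, hadj⟩⟩)
  have hdisj := h.disjoint hA hB hAB
  calc #S = #(S \ A ∪ S \ B) := by
        rw [← sdiff_inter_distrib_right, disjoint_iff_inter_eq_empty.1 hdisj, sdiff_empty]
    _ ≤ #(S \ A) + #(S \ B) := card_union_le _ _
    _ ≤ #(A ∩ T) + #(B ∩ T) := add_le_add (hexchange A hA hAM) (hexchange B hB hBM)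
    _ = #(A ∩ T ∪ B ∩ T) := (card_union_of_disjoint
        (hdisj.mono inter_subset_left inter_subset_left)).symm
    _ ≤ #T := card_le_card (union_subset inter_subset_right inter_subset_right)

theorem sum_nonpos_of_compl_adj {R : Type*} [AddCommGroup R] [LinearOrder R]
    [IsOrderedAddMonoid R] (h : IsOptimalPacking G k P) (hM : IsCriticalSize P M) (hMk : M < k)
    {g : V → R} (hg : ∀ u v, Gᶜ.Adj u v → g u + g v ≤ 0) :
    ∑ u ∈ (smallMembers P M).biUnion id, g u ≤ 0 := by
  classical
  refine sum_nonpos_of_hall Gᶜ.Adj hg fun S hS =>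
    h.card_le_card_filter_compl_adj hM hMk (fun u hu v hv huv => ?_) (hS.trans (filter_subset _ _))
  by_contra hadj
  exact (add_pos (mem_filter.1 (hS hu)).2 (mem_filter.1 (hS hv)).2).not_ge
    (hg u v ((G.compl_adj u v).2 ⟨huv, hadj⟩))

end UpperBound

section Ore

variable [DecidableRel G.Adj] {s : ℝ}

theorem nonadjCount_univ_le_of_ore [DecidableEq V] (h : IsOptimalPacking G k P)
    (hM : IsCriticalSize P M) (hMk : M < k) (hOre : ∀ x y : V, x ≠ y → ¬ G.Adj x y →
      2 * (1 - 1 / (k : ℝ)) * Fintype.card V - 2 * s ≤ G.degree x + G.degree y) :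
    (nonadjCount G ((smallMembers P M).biUnion id) univ : ℝ) ≤
      #((smallMembers P M).biUnion id) * (Fintype.card V / k + s) := by
  have haverage := h.sum_nonpos_of_compl_adj hM hMk
    (g := fun u => (1 - 1 / (k : ℝ)) * Fintype.card V - s - G.degree u) fun u v huv => by
      linarith [hOre u v huv.ne ((G.compl_adj u v).1 huv).2]
  have hdegree : (nonadjCount G ((smallMembers P M).biUnion id) univ : ℝ) +
      ∑ u ∈ (smallMembers P M).biUnion id, (G.degree u : ℝ) =
        #((smallMembers P M).biUnion id) * Fintype.card V := by
    exact_mod_cast nonadjCount_univ_add_sum_degree _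
  rw [sum_sub_distrib, sum_const, nsmul_eq_mul] at haverage
  linear_combination haverage + hdegree

theorem card_filter_le_of_ore (h : IsOptimalPacking G k P) (hM : IsCriticalSize P M)
    (hMk : M < k) (hOre : ∀ x y : V, x ≠ y → ¬ G.Adj x y →
      2 * (1 - 1 / (k : ℝ)) * Fintype.card V - 2 * s ≤ G.degree x + G.degree y) :
    (#{D ∈ P | M ≤ #D ∧ #D < k} : ℝ) ≤ k * s := by
  classical
  have hk : (0 : ℝ) < k := by exact_mod_cast Nat.zero_lt_of_lt hMk
  have hU : (0 : ℝ) < #((smallMembers P M).biUnion id) := by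
    obtain ⟨A, hA⟩ := card_pos.1 (Nat.zero_lt_of_lt hM.lt_card)
    obtain ⟨v, hv⟩ := h.nonempty A (smallMembers_subset P M hA)
    exact_mod_cast card_pos.2 ⟨v, mem_biUnion.2 ⟨A, hA, hv⟩⟩
  have hlower : (#((smallMembers P M).biUnion id) : ℝ) *
      (Fintype.card V + #{D ∈ P | M ≤ #D ∧ #D < k}) ≤
        k * nonadjCount G ((smallMembers P M).biUnion id) univ := by
    exact_mod_cast h.card_biUnion_mul_add_le hM hMk
  have hupper : (k : ℝ) * nonadjCount G ((smallMembers P M).biUnion id) univ ≤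
      #((smallMembers P M).biUnion id) * (Fintype.card V + k * s) := by
    refine (mul_le_mul_of_nonneg_left (h.nonadjCount_univ_le_of_ore hM hMk hOre) hk.le).trans_eq ?_
    field_simp
  linarith [le_of_mul_le_mul_left (hlower.trans hupper) hU]

theorem card_smallMembers_le_of_ore (h : IsOptimalPacking G k P) (hk : 0 < k) (hs : 0 ≤ s)
    (hOre : ∀ x y : V, x ≠ y → ¬ G.Adj x y →
      2 * (1 - 1 / (k : ℝ)) * Fintype.card V - 2 * s ≤ G.degree x + G.degree y) :
    (#(smallMembers P (k - 1)) : ℝ) ≤ k * s + (k - 1) := by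
  rcases le_or_gt #(smallMembers P (k - 1)) (k - 1) with hle | hlt
  · have : (#(smallMembers P (k - 1)) : ℝ) ≤ k - 1 := by
      rw [← Nat.cast_pred hk]
      exact_mod_cast hle
    linarith [mul_nonneg k.cast_nonneg hs]
  · obtain ⟨M, hMk, hM⟩ := exists_isCriticalSize hlt
    have hMpos := hM.pos h.nonempty
    have hmid : {D ∈ smallMembers P (k - 1) | M - 1 < #D} = {D ∈ P | M ≤ #D ∧ #D < k} := by
      ext D
      simp only [mem_filter, mem_smallMembers]
      lia
    have hcount := hM.card_smallMembers_le (Nat.sub_lt hMpos one_pos) (k - 1)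
    rw [hmid] at hcount
    have hcount' : (#(smallMembers P (k - 1)) : ℝ) + 1 ≤ k + #{D ∈ P | M ≤ #D ∧ #D < k} := by
      exact_mod_cast (by lia)
    linarith [h.card_filter_le_of_ore hM (by lia) hOre]

end Ore

theorem card_compl_biUnion_le [DecidableEq V] (h : IsOptimalPacking G k P) (hk : 0 < k) :
    #({A ∈ P | #A = k}.biUnion id)ᶜ ≤ #(smallMembers P (k - 1)) * (k - 1) := by
  refine (card_le_card fun v hv => ?_).trans
    (card_biUnion_le_card_mul (smallMembers P (k - 1)) id _ fun A hA => (mem_smallMembers.1 hA).2)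
  obtain ⟨A, hA, hvA⟩ := mem_biUnion.1 (h.biUnion_eq_univ hk ▸ mem_univ v)
  refine mem_biUnion.2 ⟨A, mem_smallMembers.2 ⟨hA, ?_⟩, hvA⟩
  have hne : #A ≠ k := fun hAk =>
    mem_compl.1 hv (mem_biUnion.2 ⟨A, mem_filter.2 ⟨hA, hAk⟩, hvA⟩)
  have := h.card_le A hA
  lia

end IsOptimalPacking

theorem ore_kk_tiling_general {V : Type*} [Fintype V] [DecidableEq V] (G : SimpleGraph V)
    [DecidableRel G.Adj] {k : ℕ} (hk : 0 < k) {s : ℝ} (hs : 0 ≤ s)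
    (hOre : ∀ x y : V, x ≠ y → ¬ G.Adj x y →
      2 * (1 - 1 / (k : ℝ)) * Fintype.card V - 2 * s ≤ G.degree x + G.degree y) :
    ∃ 𝒯 : Finset (Finset V),
      (∀ S ∈ 𝒯, #S = k ∧ G.IsClique (S : Set V)) ∧
      ((𝒯 : Set (Finset V)).Pairwise fun S T => Disjoint S T) ∧
      (#(𝒯.biUnion id)ᶜ : ℝ) ≤ k * (k - 1) * s + (k - 1) ^ 2 := by
  obtain ⟨P, hP⟩ := exists_isOptimalPacking G k
  refine ⟨{A ∈ P | #A = k}, fun A hA => ?_, ?_, ?_⟩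
  · exact ⟨(mem_filter.1 hA).2, hP.isClique A (mem_filter.1 hA).1⟩
  · exact hP.pairwiseDisjoint.subset (coe_subset.2 (filter_subset _ P))
  calc (#({A ∈ P | #A = k}.biUnion id)ᶜ : ℝ)
      ≤ #(smallMembers P (k - 1)) * (k - 1 : ℕ) := by exact_mod_cast hP.card_compl_biUnion_le hk
    _ ≤ (k * s + (k - 1)) * (k - 1 : ℕ) := by
        gcongr
        exact hP.card_smallMembers_le_of_ore hk hs hOre
    _ = k * (k - 1) * s + (k - 1) ^ 2 := by rw [Nat.cast_pred hk]; ring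

/-- **Lemma.** If every pair of distinct nonadjacent vertices of an `n`-vertex graph `G`
satisfies `d(x) + d(y) ≥ 2(1 - 1/k)n - 2s`, then `G` has a `K_k`-tiling covering all but
at most `k(k-1)s + (k-1)²` vertices. -/
theorem ore_kk_tiling {V : Type*} [Fintype V] [DecidableEq V]
    (G : SimpleGraph V) [DecidableRel G.Adj]
    (k : ℕ) (hk : 2 ≤ k) (s : ℕ)
    (hOre : ∀ x y : V, x ≠ y → ¬ G.Adj x y →
      2 * (1 - 1 / (k : ℝ)) * (Fintype.card V) - 2 * (s : ℝ) ≤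
        (G.degree x : ℝ) + (G.degree y : ℝ)) :
    ∃ 𝒯 : Finset (Finset V),
      (∀ S ∈ 𝒯, S.card = k ∧ G.IsClique (S : Set V)) ∧
      ((𝒯 : Set (Finset V)).Pairwise fun S T => Disjoint S T) ∧
      Fintype.card V - (𝒯.biUnion id).card ≤ k * (k - 1) * s + (k - 1) ^ 2 := by
  have htiling := ore_kk_tiling_general G (Nat.zero_lt_of_lt hk) s.cast_nonneg hOre
  simp only [card_compl, ← Nat.cast_pred (R := ℝ) (Nat.zero_lt_of_lt hk)] at htiling
  exact_mod_cast htiling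
end
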